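/- (Topological Tverberg theorem for simplicial spheres.) Let r be a power of a prime and d ≥ 1. If X is a finite simplicial complex whose body |X| is topologically homeomorphic to the sphere S^{(d+1)(r-1)-1}, then X admits no almost r-embedding into ℝ^d; that is, for every continuous map f : |X| → ℝ^d there exist pairwise disjoint faces σ_1, …, σ_r of X such that f(σ_1) ∩ … ∩ f(σ_r) ≠ ∅. -/

import Mathlib

set_option linter.unusedSectionVars false

noncomputable section
namespace Tv
open Finsupp

abbrev Ch (R V : Type) [CommRing R] := List V →₀ R

section F1
variable {R V W U M : Type} [CommRing R] [AddCommGroup M] [Module R M]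

def sg (l : List V) : Ch R V := Finsupp.single l 1

def lin (f : List V → M) : Ch R V →ₗ[R] M := Finsupp.linearCombination R f

@[simp] theorem lin_sg (f : List V → M) (l : List V) : lin (R := R) f (sg l) = f l := by
  simp [lin, sg]

theorem hom_ext {F G : Ch R V →ₗ[R] M} (h : ∀ l, F (sg l) = G (sg l)) : F = G := by
  apply Finsupp.lhom_ext'
  intro l
  ext
  simpa [sg] using h l

theorem hom_ext_apply {F G : Ch R V →ₗ[R] M} (h : ∀ l, F (sg l) = G (sg l)) (c) : F c = G c := by
  rw [hom_ext h]

/-- chains supported on a set of lists -/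
def Sp (s : Set (List V)) : Submodule R (Ch R V) := Submodule.span R (sg '' s)

theorem sg_mem {s : Set (List V)} {l : List V} (h : l ∈ s) : (sg l : Ch R V) ∈ Sp s :=
  Submodule.subset_span ⟨l, h, rfl⟩

theorem Sp_mono {s t : Set (List V)} (h : s ⊆ t) : (Sp s : Submodule R (Ch R V)) ≤ Sp t :=
  Submodule.span_mono (Set.image_mono h)

theorem Sp_map {s : Set (List V)} {F : Ch R V →ₗ[R] M} {P : Submodule R M}
    (h : ∀ l ∈ s, F (sg l) ∈ P) {c : Ch R V} (hc : c ∈ Sp s) : F c ∈ P := by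
  have : Sp s ≤ P.comap F := by
    apply Submodule.span_le.2
    rintro _ ⟨l, hl, rfl⟩
    exact h l hl
  exact this hc

theorem Sp_eq {s : Set (List V)} {F G : Ch R V →ₗ[R] M}
    (h : ∀ l ∈ s, F (sg l) = G (sg l)) {c : Ch R V} (hc : c ∈ Sp s) : F c = G c := by
  have := Sp_map (F := F - G) (P := ⊥) (s := s) (by intro l hl; simp [h l hl]) hc
  simpa [sub_eq_zero] using this

theorem Sp_iff {s : Set (List V)} {c : Ch R V} : c ∈ Sp s ↔ ∀ l, c l ≠ 0 → l ∈ s := by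
  have : Sp s = Finsupp.supported R R s := by
    rw [Finsupp.supported_eq_span_single]; rfl
  rw [this, Finsupp.mem_supported]
  simp [Set.subset_def]

theorem Sp_univ (c : Ch R V) : c ∈ Sp (Set.univ) := Sp_iff.2 (by simp)

theorem Sp_support (c : Ch R V) : c ∈ Sp (R := R) (c.support : Set (List V)) := Sp_iff.2 (by simp)

theorem Sp_inter {s t : Set (List V)} {c : Ch R V} (h : c ∈ Sp s) (h' : c ∈ Sp t) :
    c ∈ Sp (s ∩ t) := by
  rw [Sp_iff] at *
  exact fun l hl => ⟨h l hl, h' l hl⟩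

def cat : Ch R V →ₗ[R] Ch R V →ₗ[R] Ch R V :=
  lin (fun l => lin (fun m => sg (l ++ m)))

@[simp] theorem cat_sg (l m : List V) : cat (sg l : Ch R V) (sg m) = sg (l ++ m) := by
  simp [cat]

def cone (a : V) : Ch R V →ₗ[R] Ch R V := cat (sg [a])

@[simp] theorem cone_sg (a : V) (l : List V) : cone a (sg l : Ch R V) = sg (a :: l) := by
  simp [cone]

def bdL : List V → Ch R V
  | [] => 0
  | a :: l => sg l - cone a (bdL l)

def bd : Ch R V →ₗ[R] Ch R V := lin bdL

@[simp] theorem bd_nil : bd (sg [] : Ch R V) = 0 := by simp [bd, bdL]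

theorem bd_cons (a : V) (l : List V) : bd (sg (a :: l) : Ch R V) = sg l - cone a (bd (sg l)) := by
  simp [bd, bdL]

theorem bd_cone (a : V) (c : Ch R V) : bd (cone a c) = c - cone a (bd c) := by
  have := hom_ext_apply (F := bd ∘ₗ cone a) (G := LinearMap.id - cone a ∘ₗ bd)
    (by intro l; simp [bd_cons]) c
  simpa using this

@[simp] theorem bd_bd (c : Ch R V) : bd (bd c) = 0 := by
  have := hom_ext_apply (F := bd ∘ₗ (bd : Ch R V →ₗ[R] Ch R V)) (G := 0) (by
    intro l
    induction l with
    | nil => simp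
    | cons a l ih =>
      simp at ih
      simp [bd_cons, bd_cone, ih]) c
  simpa using this

/-- all entries in S, length n -/
def Li (S : Set V) (n : ℕ) : Set (List V) := {l | l.length = n ∧ ∀ x ∈ l, x ∈ S}

theorem bd_sub (l : List V) :
    bd (sg l : Ch R V) ∈ Sp (R := R) {m : List V | m.length + 1 = l.length ∧ m.Sublist l} := by
  induction l with
  | nil => simp
  | cons a l ih =>
    rw [bd_cons]
    refine sub_mem (sg_mem ⟨by simp, by simp⟩) ?_
    refine Sp_map ?_ ih
    rintro m ⟨h1, h2⟩
    rw [cone_sg]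
    exact sg_mem ⟨by simp [h1], by simpa using h2⟩

/-- boundary maps a set to another provided closed under such sublists -/
theorem bd_Sp {s t : Set (List V)}
    (h : ∀ l ∈ s, ∀ m : List V, m.Sublist l → m.length + 1 = l.length → m ∈ t)
    {c : Ch R V} (hc : c ∈ Sp s) : bd c ∈ Sp t := by
  refine Sp_map ?_ hc
  intro l hl
  exact Sp_mono (fun m hm => h l hl m hm.2 hm.1) (bd_sub l)

def push (g : V → W) : Ch R V →ₗ[R] Ch R W := lin (fun l => sg (l.map g))

@[simp] theorem push_sg (g : V → W) (l : List V) : push g (sg l : Ch R V) = sg (l.map g) := by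
  simp [push]

theorem push_cone (g : V → W) (a : V) (c : Ch R V) :
    push g (cone a c) = cone (g a) (push g c) :=
  hom_ext_apply (F := push g ∘ₗ cone a) (G := cone (g a) ∘ₗ push g) (by intro l; simp) c

theorem push_bd (g : V → W) (c : Ch R V) : push g (bd c) = bd (push g c) :=
  hom_ext_apply (F := push g ∘ₗ bd) (G := bd ∘ₗ push g) (by
    intro l
    induction l with
    | nil => simp
    | cons a l ih =>
      simp at ih
      simp [bd_cons, push_cone, ih]) c

theorem push_push (g : V → W) (k : W → U) (c : Ch R V) :
    push k (push g c) = push (k ∘ g) c :=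
  hom_ext_apply (F := push k ∘ₗ push g) (G := push (k ∘ g)) (by
    intro l
    simp) c

theorem push_Sp {g : V → W} {s : Set (List V)} {t : Set (List W)} (h : ∀ l ∈ s, l.map g ∈ t)
    {c : Ch R V} (hc : c ∈ Sp s) : push g c ∈ Sp t := by
  refine Sp_map ?_ hc
  intro l hl
  simpa using sg_mem (h l hl)

theorem cone_Sp {a : V} {s : Set (List V)} {t : Set (List V)} (h : ∀ l ∈ s, a :: l ∈ t)
    {c : Ch R V} (hc : c ∈ Sp s) : cone a c ∈ Sp t := by
  refine Sp_map ?_ hc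
  intro l hl
  simpa using sg_mem (h l hl)

theorem push_id_on {g : V → V} {c : Ch R V} (hc : c ∈ Sp {l : List V | ∀ x ∈ l, g x = x}) :
    push g c = c := by
  refine Sp_eq (G := LinearMap.id) ?_ hc
  intro l hl
  simp only [push_sg, LinearMap.id_apply]
  congr 1
  conv_rhs => rw [← List.map_id l]
  exact List.map_congr_left hl

theorem push_congr {g k : V → W} {c : Ch R V} {s : Set (List V)} (hc : c ∈ Sp s)
    (h : ∀ l ∈ s, ∀ x ∈ l, g x = k x) :
    push g c = push k c := by
  refine Sp_eq ?_ hc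
  intro l hl
  simp only [push_sg]
  congr 1
  exact List.map_congr_left (h l hl)

theorem cat_Sp {s t u : Set (List V)} (h : ∀ l ∈ s, ∀ m ∈ t, l ++ m ∈ u)
    {c e : Ch R V} (hc : c ∈ Sp s) (he : e ∈ Sp t) : cat c e ∈ Sp u := by
  refine Sp_map (F := cat.flip e) ?_ hc
  intro l hl
  simp only [LinearMap.flip_apply]
  refine Sp_map ?_ he
  intro m hm
  simpa using sg_mem (h l hl m hm)

theorem cat_cone (a : V) (c e : Ch R V) : cat (cone a c) e = cone a (cat c e) := by
  have h1 : ∀ l, cat (cone a (sg l)) e = cone a (cat (sg l) e) := by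
    intro l
    refine hom_ext_apply (F := cat (cone a (sg l))) (G := cone a ∘ₗ cat (sg l)) ?_ e
    intro m; simp
  exact hom_ext_apply (F := cat.flip e ∘ₗ cone a) (G := cone a ∘ₗ cat.flip e)
    (by intro l; simpa using h1 l) c

@[simp] theorem cat_nil (e : Ch R V) : cat (sg []) e = e :=
  hom_ext_apply (F := cat (sg [])) (G := LinearMap.id) (by intro l; simp) e

theorem cat_nil_right (e : Ch R V) : cat e (sg []) = e :=
  hom_ext_apply (F := cat.flip (sg [])) (G := LinearMap.id) (by intro l; simp) e

theorem bd_cat_sg (l : List V) (e : Ch R V) :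
    bd (cat (sg l) e) = cat (bd (sg l)) e + (-1 : R) ^ l.length • cat (sg l) (bd e) := by
  induction l with
  | nil => simp
  | cons a l ih =>
    have h : ∀ x : Ch R V, cat (sg (a :: l)) x = cone a (cat (sg l) x) := by
      intro x; rw [← cone_sg, cat_cone]
    rw [h, bd_cone, ih, h, bd_cons]
    simp only [map_sub, map_add, LinearMap.sub_apply, cat_cone, map_smul, List.length_cons, pow_succ]
    simp only [mul_neg, mul_one, neg_smul]
    abel

theorem bd_cat {n : ℕ} {c : Ch R V} (hc : c ∈ Sp {l : List V | l.length = n}) (e : Ch R V) :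
    bd (cat c e) = cat (bd c) e + (-1 : R) ^ n • cat c (bd e) := by
  refine Sp_eq (F := bd ∘ₗ cat.flip e)
    (G := cat.flip e ∘ₗ bd + (-1 : R) ^ n • cat.flip (bd e)) ?_ hc
  rintro l rfl
  simpa using bd_cat_sg l e

theorem cat_assoc (a b c : Ch R V) : cat (cat a b) c = cat a (cat b c) := by
  have h1 : ∀ l m, cat (cat (sg l) (sg m)) c = cat (sg l) (cat (sg m) c) := by
    intro l m
    refine hom_ext_apply (F := cat (cat (sg l) (sg m))) (G := cat (sg l) ∘ₗ cat (sg m)) ?_ c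
    intro m; simp
  have h2 : ∀ l, cat (cat (sg l) b) c = cat (sg l) (cat b c) := by
    intro l
    exact hom_ext_apply (F := cat.flip c ∘ₗ cat (sg l)) (G := cat (sg l) ∘ₗ cat.flip c)
      (by intro m; simpa using h1 l m) b
  exact hom_ext_apply (F := cat.flip c ∘ₗ cat.flip b) (G := cat.flip (cat b c))
      (by intro m; simpa using h2 m) a

/-- Recursor -/
def recA (p : List V → W) (Ψ : List V → Ch R W) : ℕ → Ch R V →ₗ[R] Ch R W
  | 0 => 0
  | n + 1 => lin (fun l => if l.length = n + 1 then cone (p l) (Ψ l - recA p Ψ n (bd (sg l))) else 0)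

def recur (p : List V → W) (Ψ : List V → Ch R W) : Ch R V →ₗ[R] Ch R W :=
  lin (fun l => recA p Ψ l.length (sg l))

theorem rec_nil (p : List V → W) (Ψ : List V → Ch R W) : recur p Ψ (sg []) = 0 := by
  simp [recur, recA]

theorem rec_eq (p : List V → W) (Ψ : List V → Ch R W) {l : List V} (h : l ≠ []) :
    recur p Ψ (sg l) = cone (p l) (Ψ l - recur p Ψ (bd (sg l))) := by
  obtain ⟨n, hn⟩ : ∃ n, l.length = n + 1 := Nat.exists_eq_succ_of_ne_zero (by simpa using h)
  have : recA p Ψ n (bd (sg l)) = recur p Ψ (bd (sg l)) := by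
    refine Sp_eq ?_ (bd_sub l)
    rintro m ⟨h1, h2⟩
    have : m.length = n := by omega
    simp [recur, this]
  rw [← this]
  simp [recur, hn, recA]

end F1
end Tv

end

noncomputable section
namespace Tv
open Finsupp

section F2
variable {R : Type} [CommRing R] {E E' : Type} [NormedAddCommGroup E] [NormedSpace ℝ E]
  [NormedAddCommGroup E'] [NormedSpace ℝ E']

def bary (l : List E) : E := (l.length : ℝ)⁻¹ • l.sum

def Hh : Ch R E →ₗ[R] Ch R E := recur bary sg

def Sd : Ch R E →ₗ[R] Ch R E := LinearMap.id - bd ∘ₗ Hh - Hh ∘ₗ bd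

theorem Sd_apply (c : Ch R E) : Sd c = c - bd (Hh c) - Hh (bd c) := rfl

theorem bd_Sd (c : Ch R E) : bd (Sd c) = Sd (bd c) := by
  simp [Sd_apply]

theorem Hh_nil : Hh (sg [] : Ch R E) = 0 := rec_nil _ _

theorem Hh_eq {l : List E} (h : l ≠ []) :
    Hh (sg l : Ch R E) = cone (bary l) (sg l - Hh (bd (sg l))) := rec_eq _ _ h

theorem Sd_nil : Sd (sg [] : Ch R E) = sg [] := by simp [Sd_apply, Hh_nil]

theorem Sd_eq {l : List E} (h : l ≠ []) :
    Sd (sg l : Ch R E) = cone (bary l) (Sd (bd (sg l))) := by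
  simp only [Sd_apply, Hh_eq h, bd_cone, bd_bd, map_sub, map_zero]
  abel

theorem bary_mem {l : List E} (h : l ≠ []) {C : Set E} (hC : Convex ℝ C) (hl : ∀ x ∈ l, x ∈ C) :
    bary l ∈ C := by
  have hn : (l.length : ℝ) ≠ 0 := by simpa using h
  have : bary l = ∑ i : Fin l.length, (l.length : ℝ)⁻¹ • l[i] := by
    rw [← Finset.smul_sum, bary]
    congr 1
    exact (Fin.sum_univ_getElem l).symm
  rw [this]
  apply hC.sum_mem
  · intros; positivity
  · simp [hn]
  · intro i _
    exact hl _ (by simp)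

def Fi (δ : ℝ) : Set (List E) := {l | ∀ x ∈ l, ∀ y ∈ l, dist x y ≤ δ}

def qq (n : ℕ) : ℝ := n / (n + 1)

theorem qq_mono {m n : ℕ} (h : m ≤ n) : qq m ≤ qq n := by
  unfold qq
  have : (m : ℝ) ≤ n := by exact_mod_cast h
  rw [div_le_div_iff₀ (by positivity) (by positivity)]
  nlinarith

theorem qq_nonneg (n : ℕ) : 0 ≤ qq n := by unfold qq; positivity
theorem qq_lt (n : ℕ) : qq n < 1 := by
  unfold qq
  rw [div_lt_one (by positivity)]; linarith

theorem bary_dist {l : List E} {δ : ℝ} (hl : l ∈ Fi δ) {y : E} (hy : y ∈ l) :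
    dist (bary l) y ≤ qq l.length * δ := by
  have h : l ≠ [] := by rintro rfl; simp at hy
  have hpos : 0 < l.length := List.length_pos_iff.2 h
  have hn : (0 : ℝ) < l.length := by exact_mod_cast hpos
  have hδ : 0 ≤ δ := dist_nonneg.trans (hl y hy y hy)
  obtain ⟨i, hi, rfl⟩ := List.getElem_of_mem hy
  let i' : Fin l.length := ⟨i, hi⟩
  have : bary l - l[i] = (l.length : ℝ)⁻¹ • ∑ j : Fin l.length, (l[j] - l[i]) := by
    rw [bary, Finset.sum_sub_distrib, smul_sub]
    congr 1
    · congr 1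
      exact (Fin.sum_univ_getElem l).symm
    · simp [← Nat.cast_smul_eq_nsmul ℝ, smul_smul, hn.ne']
  rw [dist_eq_norm, this, norm_smul, norm_inv, Real.norm_natCast]
  have h2 : ‖∑ j : Fin l.length, (l[j] - l[i])‖ ≤ (l.length - 1) * δ := by
    rw [← Finset.add_sum_erase _ _ (Finset.mem_univ i')]
    simp only [i', Fin.getElem_fin, sub_self, zero_add]
    refine (norm_sum_le_of_le (n := fun _ => δ) _ ?_).trans ?_
    · intro j _
      rw [← dist_eq_norm]
      exact hl _ (by simp) _ (by simp)
    · simp [Finset.card_erase_of_mem, Nat.cast_sub hpos]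
  calc _ ≤ (l.length : ℝ)⁻¹ * ((l.length - 1) * δ) := by gcongr
    _ ≤ _ := by
      rw [← mul_assoc]
      gcongr
      unfold qq
      rw [inv_mul_eq_div, div_le_div_iff₀ hn (by positivity)]
      nlinarith

theorem Hh_Sp {C : Set E} (hC : Convex ℝ C) {n : ℕ} {c : Ch R E} (hc : c ∈ Sp (Li C n)) :
    Hh c ∈ Sp (Li C (n + 1)) := by
  induction n generalizing c with
  | zero =>
    refine Sp_map ?_ hc
    rintro l ⟨h1, h2⟩
    obtain rfl := List.length_eq_zero_iff.1 h1
    simp [Hh_nil]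
  | succ n ih =>
    refine Sp_map ?_ hc
    rintro l ⟨h1, h2⟩
    have hne : l ≠ [] := by rintro rfl; simp at h1
    rw [Hh_eq hne]
    refine cone_Sp (s := Li C (n + 1)) ?_ (sub_mem (sg_mem ⟨h1, h2⟩) (ih ?_))
    · rintro m ⟨h3, h4⟩
      refine ⟨by simp [h3], ?_⟩
      simp only [List.mem_cons, forall_eq_or_imp]
      exact ⟨bary_mem hne hC h2, h4⟩
    · refine Sp_mono ?_ (bd_sub l)
      rintro m ⟨h3, h4⟩
      exact ⟨by omega, fun x hx => h2 x (h4.subset hx)⟩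

theorem Sd_Sp {C : Set E} (hC : Convex ℝ C) {n : ℕ} {δ : ℝ} {c : Ch R E}
    (hc : c ∈ Sp (Li C n ∩ Fi δ)) :
    Sd c ∈ Sp (Li C n ∩ Fi (qq n * δ)) := by
  induction n generalizing c C with
  | zero =>
    refine Sp_map ?_ hc
    rintro l ⟨⟨h1, h2⟩, -⟩
    obtain rfl := List.length_eq_zero_iff.1 h1
    rw [Sd_nil]
    exact sg_mem (by simp [Li, Fi])
  | succ n ih =>
    refine Sp_map ?_ hc
    rintro l ⟨⟨h1, h2⟩, h3⟩
    have hne : l ≠ [] := by rintro rfl; simp at h1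
    rw [Sd_eq hne]
    set C' : Set E := C ∩ Metric.closedBall (bary l) (qq (n+1) * δ)
    have hC' : Convex ℝ C' := hC.inter (convex_closedBall _ _)
    have hδ : 0 ≤ δ := by
      obtain ⟨x, hx⟩ := List.exists_mem_of_ne_nil l hne
      exact dist_nonneg.trans (h3 x hx x hx)
    have hb : bd (sg l : Ch R E) ∈ Sp (R := R) (Li C' n ∩ Fi δ) := by
      refine Sp_mono ?_ (bd_sub l)
      rintro m ⟨h4, h5⟩
      refine ⟨⟨by omega, fun x hx => ⟨h2 x (h5.subset hx), ?_⟩⟩,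
        fun x hx y hy => h3 x (h5.subset hx) y (h5.subset hy)⟩
      rw [Metric.mem_closedBall, dist_comm, ← h1]
      exact bary_dist h3 (h5.subset hx)
    refine cone_Sp ?_ (ih hC' hb)
    rintro m ⟨⟨h4, h5⟩, h6⟩
    have hb2 : 0 ≤ qq (n+1) * δ := mul_nonneg (qq_nonneg _) hδ
    refine ⟨⟨by simp [h4], ?_⟩, ?_⟩
    · simp only [List.mem_cons, forall_eq_or_imp]
      exact ⟨bary_mem hne hC h2, fun x hx => (h5 x hx).1⟩
    · intro x hx y hy
      rw [List.mem_cons] at hx hy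
      rcases hx with rfl | hx <;> rcases hy with rfl | hy
      · simpa using hb2
      · have := (h5 y hy).2
        rwa [Metric.mem_closedBall, dist_comm] at this
      · exact (h5 x hx).2
      · exact (h6 x hx y hy).trans (by gcongr; exact qq_mono (by omega))

theorem exists_Fi (c : Ch R E) : ∃ Δ : ℝ, 0 < Δ ∧ c ∈ Sp (R := R) (Fi Δ : Set (List E)) := by
  have h1 : ∀ l : List E, ∃ Δ : ℝ, l ∈ Fi Δ := by
    intro l
    have : Bornology.IsBounded {x | x ∈ l} := (List.finite_toSet l).isBounded
    obtain ⟨Δ, h⟩ := Metric.isBounded_iff.1 this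
    exact ⟨Δ, fun x hx y hy => h hx hy⟩
  choose Δ hΔ using h1
  obtain ⟨B, hB⟩ := (c.support.finite_toSet.image Δ).bddAbove
  refine ⟨max B 1, by positivity, Sp_mono ?_ (Sp_support c)⟩
  intro l hl x hx y hy
  exact (hΔ l x hx y hy).trans ((hB ⟨l, hl, rfl⟩).trans (le_max_left _ _))

def SdM (M : ℕ) : Ch R E →ₗ[R] Ch R E := Sd ^ M

def HM : ℕ → (Ch R E →ₗ[R] Ch R E)
  | 0 => 0
  | M + 1 => HM M + Hh ∘ₗ SdM M

theorem SdM_zero (c : Ch R E) : SdM 0 c = c := rfl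
theorem SdM_succ (M : ℕ) (c : Ch R E) : SdM (M + 1) c = Sd (SdM M c) := by
  simp [SdM, pow_succ']

theorem bd_SdM (M : ℕ) (c : Ch R E) : bd (SdM M c) = SdM M (bd c) := by
  induction M with
  | zero => simp [SdM_zero]
  | succ M ih => rw [SdM_succ, SdM_succ, bd_Sd, ih]

theorem SdM_nil (M : ℕ) : SdM M (sg [] : Ch R E) = sg [] := by
  induction M with
  | zero => simp [SdM_zero]
  | succ M ih => rw [SdM_succ, ih, Sd_nil]

theorem SdM_eq (M : ℕ) (c : Ch R E) : SdM M c = c - bd (HM M c) - HM M (bd c) := by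
  induction M with
  | zero => simp [SdM_zero, HM]
  | succ M ih =>
    rw [SdM_succ, Sd_apply, bd_SdM]
    conv_lhs => enter [1,1]; rw [ih]
    simp only [HM, LinearMap.add_apply, LinearMap.comp_apply, map_add]
    abel

theorem SdM_Sp {C : Set E} (hC : Convex ℝ C) {n : ℕ} {δ : ℝ} {c : Ch R E} (M : ℕ)
    (hc : c ∈ Sp (Li C n ∩ Fi δ)) :
    SdM M c ∈ Sp (Li C n ∩ Fi (qq n ^ M * δ)) := by
  induction M with
  | zero => simpa [SdM_zero] using hc
  | succ M ih =>
    rw [SdM_succ, pow_succ', mul_assoc]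
    exact Sd_Sp hC ih

theorem SdM_Li {C : Set E} (hC : Convex ℝ C) {n : ℕ} {c : Ch R E} (M : ℕ)
    (hc : c ∈ Sp (Li C n)) : SdM M c ∈ Sp (Li C n) := by
  obtain ⟨Δ, -, h⟩ := exists_Fi c
  exact Sp_mono Set.inter_subset_left (SdM_Sp hC M (Sp_inter hc h))

theorem HM_Sp {C : Set E} (hC : Convex ℝ C) {n : ℕ} {c : Ch R E} (M : ℕ)
    (hc : c ∈ Sp (Li C n)) : HM M c ∈ Sp (Li C (n + 1)) := by
  induction M with
  | zero => simp [HM]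
  | succ M ih => exact add_mem ih (Hh_Sp hC (SdM_Li hC M hc))

theorem Li_inter {S T : Set E} {n : ℕ} : Li S n ∩ Li T n = Li (S ∩ T) n := by
  ext l
  simp only [Li, Set.mem_inter_iff, Set.mem_ofPred_eq]
  exact ⟨fun h => ⟨h.1.1, fun x hx => ⟨h.1.2 x hx, h.2.2 x hx⟩⟩,
    fun h => ⟨⟨h.1, fun x hx => (h.2 x hx).1⟩, ⟨h.1, fun x hx => (h.2 x hx).2⟩⟩⟩

theorem hull_dist {S : Set E} {δ : ℝ} (h : ∀ x ∈ S, ∀ y ∈ S, dist x y ≤ δ) :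
    ∀ x ∈ convexHull ℝ S, ∀ y ∈ convexHull ℝ S, dist x y ≤ δ := by
  intro x hx y hy
  obtain ⟨x', hx', y', hy', h'⟩ := convexHull_exists_dist_ge2 hx hy
  exact h'.trans (h x' hx' y' hy')

theorem HM_Fi {C : Set E} (hC : Convex ℝ C) {n : ℕ} {c : Ch R E} (M : ℕ) {δ : ℝ}
    (hc : c ∈ Sp (Li C n ∩ Fi δ)) : HM M c ∈ Sp (Li C (n + 1) ∩ Fi δ) := by
  refine Sp_map ?_ hc
  rintro l ⟨⟨h1, h2⟩, h3⟩
  have := HM_Sp (R := R) (hC.inter (convex_convexHull ℝ {x | x ∈ l})) (n := n) (c := sg l) M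
    (sg_mem ⟨h1, fun x hx => ⟨h2 x hx, subset_convexHull _ _ hx⟩⟩)
  refine Sp_mono ?_ this
  rintro m ⟨h4, h5⟩
  refine ⟨⟨h4, fun x hx => (h5 x hx).1⟩, fun x hx y hy => ?_⟩
  exact hull_dist (fun x hx y hy => h3 x hx y hy) _ (h5 x hx).2 _ (h5 y hy).2

theorem exists_qq (n : ℕ) (Δ : ℝ) {δ : ℝ} (hδ : 0 < δ) : ∃ M₀, ∀ M ≥ M₀, qq n ^ M * Δ ≤ δ := by
  have h := (tendsto_pow_atTop_nhds_zero_of_lt_one (qq_nonneg n) (qq_lt n)).mul_const Δ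
  rw [zero_mul] at h
  have := h.eventually (gt_mem_nhds hδ)
  obtain ⟨M₀, h⟩ := Filter.eventually_atTop.1 this
  exact ⟨M₀, fun M hM => (h M hM).le⟩

theorem Fi_mono {δ δ' : ℝ} (h : δ ≤ δ') : (Fi δ : Set (List E)) ⊆ Fi δ' :=
  fun _ hl x hx y hy => (hl x hx y hy).trans h

/-- fine subdivision -/
theorem exists_SdM {C : Set E} (hC : Convex ℝ C) {n : ℕ} {c : Ch R E}
    (hc : c ∈ Sp (Li C n)) {δ : ℝ} (hδ : 0 < δ) :
    ∃ M₀, ∀ M ≥ M₀, SdM M c ∈ Sp (Li C n ∩ Fi δ) := by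
  obtain ⟨Δ, -, h⟩ := exists_Fi c
  obtain ⟨M₀, hM⟩ := exists_qq n Δ hδ
  refine ⟨M₀, fun M hMM => ?_⟩
  exact Sp_mono (Set.inter_subset_inter_right _ (Fi_mono (hM M hMM))) (SdM_Sp hC M (Sp_inter hc h))

/-- F3 -/
theorem convex_fill {C : Set E} (hC : Convex ℝ C) (hne : C.Nonempty) {n : ℕ} {δ : ℝ} (hδ : 0 < δ)
    {c : Ch R E} (hc : c ∈ Sp (Li C n ∩ Fi δ)) (hz : bd c = 0) :
    ∃ b ∈ Sp (R := R) (Li C (n + 1) ∩ Fi δ), bd b = c := by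
  obtain ⟨p, hp⟩ := hne
  have h1 : cone p c ∈ Sp (Li C (n + 1)) := by
    refine cone_Sp ?_ hc
    rintro l ⟨⟨h1, h2⟩, -⟩
    refine ⟨by simp [h1], by simpa using ⟨hp, h2⟩⟩
  obtain ⟨M, hM⟩ := exists_SdM hC h1 hδ
  refine ⟨SdM M (cone p c) + HM M c, add_mem (hM M le_rfl) (HM_Fi hC M hc), ?_⟩
  rw [map_add, bd_SdM, bd_cone, hz, map_zero, sub_zero, SdM_eq, hz]
  simp

theorem bary_map (A : E →ₗ[ℝ] E') (l : List E) : bary (l.map A) = A (bary l) := by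
  simp [bary, map_list_sum]

theorem Hh_push (A : E →ₗ[ℝ] E') (c : Ch R E) : push A (Hh c) = Hh (push A c) := by
  have : ∀ (n : ℕ) (l : List E), l.length = n → push A (Hh (sg l : Ch R E)) = Hh (push A (sg l)) := by
    intro n
    induction n with
    | zero =>
      intro l hl
      obtain rfl := List.length_eq_zero_iff.1 hl
      simp [Hh_nil]
    | succ n ih =>
      intro l hl
      have hne : l ≠ [] := by rintro rfl; simp at hl
      have hne' : l.map A ≠ [] := by simpa using hne
      have h2 : push A (Hh (bd (sg l : Ch R E))) = Hh (push A (bd (sg l))) := by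
        refine Sp_eq (R := R) (F := push A ∘ₗ Hh) (G := Hh ∘ₗ push A) ?_ (bd_sub l)
        rintro m ⟨h, -⟩
        exact ih m (by omega)
      rw [Hh_eq hne, push_cone, map_sub, h2, push_sg, Hh_eq hne', bary_map, push_bd, push_sg]
  exact hom_ext_apply (R := R) (F := push A ∘ₗ Hh) (G := Hh ∘ₗ push A) (fun l => this _ l rfl) c

theorem SdM_push (A : E →ₗ[ℝ] E') (M : ℕ) (c : Ch R E) : push A (SdM M c) = SdM M (push A c) := by
  induction M with
  | zero => simp [SdM_zero]
  | succ M ih =>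
    rw [SdM_succ, SdM_succ, ← ih, Sd_apply, Sd_apply]
    simp only [map_sub, push_bd, Hh_push]

end F2
end Tv

end

noncomputable section
namespace Tv
open Finsupp

section F4
variable {R : Type} [CommRing R] {V : Type} [Fintype V] [DecidableEq V]

/-- the geometric simplex -/
def Dl (s : Finset V) : Set (V → ℝ) := {y | (∀ v, 0 ≤ y v) ∧ ∑ v, y v = 1 ∧ ∀ v, v ∉ s → y v = 0}

def psup (y : V → ℝ) : Finset V := Finset.univ.filter (fun v => 0 < y v)

theorem mem_psup {y : V → ℝ} {v : V} : v ∈ psup y ↔ 0 < y v := by simp [psup]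

def Bd (A : Set (Finset V)) : Set (V → ℝ) := ⋃ s ∈ A, Dl s

theorem Dl_convex (s : Finset V) : Convex ℝ (Dl s) := by
  intro x hx y hy a b ha hb hab
  refine ⟨fun v => ?_, ?_, fun v hv => ?_⟩
  · have := hx.1 v
    have := hy.1 v
    simp only [Pi.add_apply, Pi.smul_apply, smul_eq_mul]
    positivity
  · simp only [Pi.add_apply, Pi.smul_apply, smul_eq_mul, Finset.sum_add_distrib,
      ← Finset.mul_sum, hx.2.1, hy.2.1, mul_one, hab]
  · simp [hx.2.2 v hv, hy.2.2 v hv]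

theorem Dl_le_one {s : Finset V} {y : V → ℝ} (hy : y ∈ Dl s) (v : V) : y v ≤ 1 := by
  rw [← hy.2.1]
  exact Finset.single_le_sum (fun i _ => hy.1 i) (Finset.mem_univ v)

theorem Dl_compact (s : Finset V) : IsCompact (Dl s) := by
  apply Metric.isCompact_of_isClosed_isBounded
  · have : Dl s = (⋂ v, {y | 0 ≤ y v}) ∩ {y | ∑ v, y v = 1} ∩ (⋂ v, ⋂ (_ : v ∉ s), {y | y v = 0}) := by
      ext y; simp [Dl, and_assoc]
    rw [this]
    refine IsClosed.inter (IsClosed.inter ?_ ?_) ?_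
    · exact isClosed_iInter fun v => isClosed_le continuous_const (continuous_apply v)
    · exact isClosed_eq (by fun_prop) continuous_const
    · exact isClosed_iInter fun v => isClosed_iInter fun _ =>
        isClosed_eq (continuous_apply v) continuous_const
  · refine Bornology.IsBounded.subset (Metric.isBounded_Icc (0 : V → ℝ) 1) ?_
    intro y hy
    exact ⟨fun v => hy.1 v, fun v => Dl_le_one hy v⟩

theorem Bd_compact (A : Set (Finset V)) : IsCompact (Bd A) := by
  have : A.Finite := Set.toFinite A
  exact this.isCompact_biUnion fun s _ => Dl_compact s

theorem Dl_mono {s t : Finset V} (h : s ⊆ t) : Dl s ⊆ Dl t :=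
  fun _ hy => ⟨hy.1, hy.2.1, fun v hv => hy.2.2 v (fun h' => hv (h h'))⟩

theorem Dl_subset_Bd {A : Set (Finset V)} {s : Finset V} (h : s ∈ A) : Dl s ⊆ Bd A :=
  Set.subset_biUnion_of_mem (u := fun s => Dl s) h

theorem mem_Dl_psup {s : Finset V} {y : V → ℝ} (hy : y ∈ Dl s) : y ∈ Dl (psup y) :=
  ⟨hy.1, hy.2.1, fun v hv => le_antisymm (by simpa [mem_psup] using hv) (hy.1 v)⟩

theorem psup_subset {s : Finset V} {y : V → ℝ} (hy : y ∈ Dl s) : psup y ⊆ s := by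
  intro v hv
  by_contra h
  rw [mem_psup, hy.2.2 v h] at hv
  exact lt_irrefl _ hv

theorem Dl_dist {s t : Finset V} {x y : V → ℝ} (hx : x ∈ Dl s) (hy : y ∈ Dl t) : dist x y ≤ 1 := by
  rw [dist_pi_le_iff zero_le_one]
  intro v
  rw [Real.dist_eq, abs_le]
  have := hx.1 v
  have := hy.1 v
  have := Dl_le_one hx v
  have := Dl_le_one hy v
  constructor <;> linarith

def pt (v : V) : V → ℝ := Pi.single v 1

theorem pt_mem {s : Finset V} {v : V} (h : v ∈ s) : pt v ∈ Dl s := by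
  refine ⟨fun w => ?_, by simp [pt], fun w hw => ?_⟩
  · by_cases h' : w = v
    · subst h'; simp [pt]
    · simp [pt, h']
  · have : w ≠ v := by rintro rfl; exact hw h
    simp [pt, this]

theorem SdM_simplex (n : ℕ) {δ : ℝ} (hδ : 0 < δ) : ∃ M₀, ∀ M ≥ M₀, ∀ l : List V, l.length = n →
    SdM M (sg (l.map pt) : Ch R (V → ℝ)) ∈ Sp (R := R) (Li (Dl l.toFinset) n ∩ Fi δ) := by
  obtain ⟨M₀, hM₀⟩ := exists_qq n 1 hδ
  refine ⟨M₀, fun M hM l hl => ?_⟩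
  refine Sp_mono (Set.inter_subset_inter_right _ (Fi_mono (hM₀ M hM)))
    (SdM_Sp (Dl_convex l.toFinset) M (sg_mem ⟨⟨by simp [hl], ?_⟩, ?_⟩))
  · intro x hx
    obtain ⟨v, hv, rfl⟩ := List.mem_map.1 hx
    exact pt_mem (by simpa using hv)
  · intro x hx y hy
    obtain ⟨v, hv, rfl⟩ := List.mem_map.1 hx
    obtain ⟨w, hw, rfl⟩ := List.mem_map.1 hy
    exact Dl_dist (s := {v}) (t := {w}) (pt_mem (by simp)) (pt_mem (by simp))

def La (A : Set (Finset V)) (n : ℕ) : Set (List V) := {l | l.length = n ∧ l.toFinset ∈ A}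

variable (R) in
def Acyc (A : Set (Finset V)) (n : ℕ) : Prop :=
  ∀ c : Ch R V, c ∈ Sp (La A n) → bd c = 0 → ∃ b ∈ Sp (R := R) (La A (n + 1)), bd b = c

variable (R) in
def VAcyc {E : Type} [NormedAddCommGroup E] (B : Set E) (n : ℕ) : Prop :=
  ∀ δ > 0, ∃ δ₁ > 0, ∀ c : Ch R E, c ∈ Sp (Li B n ∩ Fi δ₁) → bd c = 0 →
    ∃ b ∈ Sp (R := R) (Li B (n + 1) ∩ Fi δ), bd b = c

/-- carrier homotopy -/
theorem carrier_homotopy [Nonempty V] {A : Set (Finset V)} (hA : IsLowerSet A)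
    (θ : Ch R V →ₗ[R] Ch R V) (hbd : ∀ c, bd (θ c) = θ (bd c)) (h0 : θ (sg []) = sg [])
    (hc : ∀ l : List V, l.toFinset ∈ A → θ (sg l) ∈ Sp (R := R) (Li {x | x ∈ l} l.length))
    {n : ℕ} {c : Ch R V} (hcA : c ∈ Sp (La A n)) (hz : bd c = 0) :
    ∃ e ∈ Sp (R := R) (La A (n + 1)), bd e = θ c - c := by
  obtain ⟨v₀⟩ := ‹Nonempty V›
  let hd : List V → V := fun l => l.head?.getD v₀
  have hhd : ∀ l, l ≠ [] → hd l ∈ l := by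
    intro l hl
    cases l with
    | nil => exact absurd rfl hl
    | cons a l => simp [hd]
  let h : Ch R V →ₗ[R] Ch R V := recur hd (fun l => θ (sg l) - sg l)
  have hsp : ∀ (n : ℕ) (l : List V), l.length = n → l.toFinset ∈ A →
      h (sg l) ∈ Sp (R := R) (Li {x | x ∈ l} (n + 1)) := by
    intro n
    induction n with
    | zero =>
      intro l hl hlA
      obtain rfl := List.length_eq_zero_iff.1 hl
      simp [h, rec_nil]
    | succ n ih =>
      intro l hl hlA
      have hne : l ≠ [] := by rintro rfl; simp at hl
      simp only [h]
      rw [rec_eq _ _ hne]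
      refine cone_Sp (s := Li {x | x ∈ l} (n + 1)) ?_ ?_
      · rintro m ⟨h1, h2⟩
        exact ⟨by simp [h1], by simpa using ⟨hhd l hne, h2⟩⟩
      · refine sub_mem (sub_mem (hl ▸ hc l hlA) (sg_mem ⟨hl, fun x hx => hx⟩)) ?_
        refine Sp_map ?_ (bd_sub l)
        rintro m ⟨h1, h2⟩
        refine Sp_mono ?_ (ih m (by omega) (hA (fun x hx => by simpa using h2.subset (by simpa using hx)) hlA))
        rintro k ⟨h3, h4⟩
        exact ⟨h3, fun x hx => h2.subset (h4 x hx)⟩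
  have hhom : ∀ (n : ℕ) (l : List V), l.length = n →
      bd (h (sg l)) + h (bd (sg l)) = θ (sg l) - sg l := by
    intro n
    induction n with
    | zero =>
      intro l hl
      obtain rfl := List.length_eq_zero_iff.1 hl
      simp [h, rec_nil, h0]
    | succ n ih =>
      intro l hl
      have hne : l ≠ [] := by rintro rfl; simp at hl
      have h1 : bd (h (bd (sg l : Ch R V))) + h (bd (bd (sg l))) = θ (bd (sg l)) - bd (sg l) := by
        refine Sp_eq (F := bd ∘ₗ h + h ∘ₗ bd) (G := θ - LinearMap.id) ?_ (bd_sub l)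
        rintro m ⟨h3, -⟩
        exact ih m (by omega)
      have h2 : h (sg l) = cone (hd l) (θ (sg l) - sg l - h (bd (sg l))) := rec_eq _ _ hne
      rw [h2, bd_cone]; simp only [map_sub, hbd]
      rw [bd_bd, map_zero, add_zero] at h1
      rw [h1, map_sub]
      simp
  refine ⟨h c, ?_, ?_⟩
  · refine Sp_map ?_ hcA
    rintro l ⟨h1, h2⟩
    refine Sp_mono ?_ (hsp n l h1 h2)
    rintro m ⟨h3, h4⟩
    refine ⟨h3, hA ?_ h2⟩
    intro x hx
    simpa using h4 x (by simpa using hx)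
  · have := hom_ext_apply (F := bd ∘ₗ h + h ∘ₗ bd) (G := θ - LinearMap.id)
      (fun l => hhom _ l rfl) c
    simpa [hz] using this

theorem psup_mem_of_Bd {A : Set (Finset V)} (hA : IsLowerSet A) {y : V → ℝ} (hy : y ∈ Bd A) :
    psup y ∈ A := by
  simp only [Bd, Set.mem_iUnion] at hy
  obtain ⟨s, hs, h⟩ := hy
  exact hA (psup_subset h) hs

theorem uc_on {X Y : Type} [PseudoMetricSpace X] [PseudoMetricSpace Y] {S : Set X}
    (hS : IsCompact S) {u : X → Y} (hu : ContinuousOn u S) {δ : ℝ} (hδ : 0 < δ) :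
    ∃ δ' > 0, ∀ x ∈ S, ∀ y ∈ S, dist x y ≤ δ' → dist (u x) (u y) < δ := by
  have := hS.uniformContinuousOn_of_continuous hu
  obtain ⟨ε, hε, h⟩ := Metric.uniformContinuousOn_iff.1 this δ hδ
  exact ⟨ε / 2, by positivity, fun x hx y hy hxy => h x hx y hy (by linarith)⟩

/-- lower bound for the maximal entry -/
theorem exists_tau {E : Type} [TopologicalSpace E] {B : Set E} (hB : IsCompact B)
    {I : Type} [Fintype I] {κ : E → I → ℝ}
    (hκ : ContinuousOn κ B) (hpos : ∀ b ∈ B, ∃ v, 0 < κ b v) :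
    ∃ τ > 0, ∀ b ∈ B, ∃ v, τ ≤ κ b v := by
  rcases B.eq_empty_or_nonempty with rfl | hne
  · exact ⟨1, one_pos, by simp⟩
  have hI : Nonempty I := by
    obtain ⟨b, hb⟩ := hne
    exact (hpos b hb).nonempty
  have hc : ContinuousOn (fun b => Finset.univ.sup' Finset.univ_nonempty (fun v => κ b v)) B := by
    apply ContinuousOn.finset_sup'_apply
    intro i _
    exact (continuous_apply i).comp_continuousOn hκ
  obtain ⟨b₀, hb₀, hmin⟩ := hB.exists_isMinOn hne hc
  refine ⟨Finset.univ.sup' Finset.univ_nonempty (fun v => κ b₀ v), ?_, fun b hb => ?_⟩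
  rotate_left
  · obtain ⟨v, -, hv⟩ := Finset.exists_mem_eq_sup' Finset.univ_nonempty (fun v => κ b v)
    refine ⟨v, ?_⟩
    rw [← hv]
    exact hmin hb
  · obtain ⟨v, hv⟩ := hpos b₀ hb₀
    exact hv.trans_le (Finset.le_sup' (fun v => κ b₀ v) (Finset.mem_univ v))

theorem transfer {E : Type} [NormedAddCommGroup E] {A : Set (Finset V)} (hA : IsLowerSet A)
    {B : Set E} (hB : IsCompact B) (hne : B.Nonempty) {u : (V → ℝ) → E} {κ : E → V → ℝ}
    (hu : ContinuousOn u (Bd A)) (huB : Set.MapsTo u (Bd A) B) (hκ : ContinuousOn κ B)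
    (hpos : ∀ b ∈ B, ∃ v, 0 < κ b v) (hκA : ∀ b ∈ B, psup (κ b) ∈ A)
    (hcar : ∀ y ∈ Bd A, ∀ v, 0 < κ (u y) v → 0 < y v) {n : ℕ} (hV : VAcyc R B n) :
    Acyc R A n := by
  intro c hcA hz
  obtain ⟨τ, hτ, hτB⟩ := exists_tau hB hκ hpos
  obtain ⟨δ, hδ, hδB⟩ := uc_on hB hκ hτ
  obtain ⟨δ₁, hδ₁, hfill⟩ := hV δ hδ
  obtain ⟨δ₂, hδ₂, hu2⟩ := uc_on (Bd_compact A) hu hδ₁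
  obtain ⟨M, hM⟩ := SdM_simplex (R := R) (V := V) n hδ₂
  replace hM := hM M le_rfl
  have : Nonempty V := by
    obtain ⟨b, hb⟩ := hne
    exact (hpos b hb).nonempty
  have hη : ∃ η : E → V, ∀ b ∈ B, τ ≤ κ b (η b) := by
    classical
    choose! η hη using hτB
    exact ⟨η, hη⟩
  obtain ⟨η, hη⟩ := hη
  let θ₁ : Ch R V →ₗ[R] Ch R E := push u ∘ₗ SdM M ∘ₗ push pt
  let θ : Ch R V →ₗ[R] Ch R V := push η ∘ₗ θ₁
  have hθ₁ : ∀ c, bd (θ₁ c) = θ₁ (bd c) := by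
    intro c; simp [θ₁, ← push_bd, bd_SdM]
  have hθ : ∀ c, bd (θ c) = θ (bd c) := by
    intro c; simp [θ, ← push_bd, hθ₁]
  have h0 : θ (sg []) = sg [] := by simp [θ, θ₁, SdM_nil]
  -- carried by A
  have hcar' : ∀ l : List V, l.toFinset ∈ A → θ (sg l) ∈ Sp (R := R) (Li {x | x ∈ l} l.length) := by
    intro l hl
    have h1 : SdM M (sg (l.map pt) : Ch R (V → ℝ)) ∈ Sp (R := R) (Li (Dl l.toFinset) l.length) := by
      refine SdM_Li (Dl_convex _) M (sg_mem ⟨by simp, ?_⟩)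
      intro x hx
      obtain ⟨v, hv, rfl⟩ := List.mem_map.1 hx
      exact pt_mem (by simpa using hv)
    simp only [θ, θ₁, LinearMap.comp_apply, push_sg, push_push]
    refine push_Sp ?_ h1
    rintro m ⟨h2, h3⟩
    refine ⟨by simp [h2], ?_⟩
    intro x hx
    obtain ⟨y, hy, rfl⟩ := List.mem_map.1 hx
    have hy' := h3 y hy
    have hyB := Dl_subset_Bd hl hy'
    have := hcar y hyB _ (hτ.trans_le (hη _ (huB hyB)))
    have := psup_subset hy' (mem_psup.2 this)
    simpa using this
  obtain ⟨e, he, hbe⟩ := carrier_homotopy hA θ hθ h0 hcar' hcA hz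
  have hc1 : θ₁ c ∈ Sp (R := R) (Li B n ∩ Fi δ₁) := by
    refine Sp_map ?_ hcA
    rintro l ⟨h1, h2⟩
    simp only [θ₁, LinearMap.comp_apply, push_sg]
    refine push_Sp ?_ (hM l h1)
    rintro m ⟨⟨h3, h4⟩, h5⟩
    refine ⟨⟨by simp [h3], ?_⟩, ?_⟩
    · intro x hx
      obtain ⟨y, hy, rfl⟩ := List.mem_map.1 hx
      exact huB (Dl_subset_Bd h2 (h4 y hy))
    · intro x hx x' hx'
      obtain ⟨y, hy, rfl⟩ := List.mem_map.1 hx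
      obtain ⟨y', hy', rfl⟩ := List.mem_map.1 hx'
      exact (hu2 y (Dl_subset_Bd h2 (h4 y hy)) y' (Dl_subset_Bd h2 (h4 y' hy')) (h5 y hy y' hy')).le
  obtain ⟨b, hb, hbb⟩ := hfill _ hc1 (by rw [hθ₁, hz, map_zero])
  refine ⟨push η b - e, sub_mem (push_Sp ?_ hb) he, ?_⟩
  · rintro m ⟨⟨h1, h2⟩, h3⟩
    refine ⟨by simp [h1], ?_⟩
    cases m with
    | nil => simp at h1
    | cons b₀ m =>
      refine hA ?_ (hκA b₀ (h2 b₀ (by simp)))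
      intro x hx
      rw [List.mem_toFinset, List.mem_map] at hx
      obtain ⟨y, hy, rfl⟩ := hx
      rw [mem_psup]
      have h4 := hη y (h2 y hy)
      have h5 := hδB y (h2 y hy) b₀ (h2 b₀ (by simp)) (h3 y hy b₀ (by simp))
      have h6 := (dist_le_pi_dist (κ y) (κ b₀) (η y)).trans_lt h5
      rw [Real.dist_eq, abs_lt] at h6
      linarith
  · rw [map_sub, hbe, ← push_bd, hbb]
    simp [θ]

end F4
end Tv

end

noncomputable section
namespace Tv
open Finsupp

section F5
variable {R : Type} [CommRing R] {V : Type} [Fintype V] [DecidableEq V]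
variable {E : Type} [NormedAddCommGroup E] [InnerProductSpace ℝ E] [FiniteDimensional ℝ E]

/-- homeomorphism with the sphere, in terms of functions on ambient spaces -/
structure SphHomeo (X : Set (Finset V)) (E : Type) [NormedAddCommGroup E] where
  u : (V → ℝ) → E
  k : E → V → ℝ
  hu : ContinuousOn u (Bd X)
  hk : ContinuousOn k (Metric.sphere 0 1)
  mu : Set.MapsTo u (Bd X) (Metric.sphere 0 1)
  mkk : Set.MapsTo k (Metric.sphere 0 1) (Bd X)
  ku : ∀ y ∈ Bd X, k (u y) = y
  uk : ∀ x ∈ Metric.sphere (0 : E) 1, u (k x) = x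

theorem VAcyc_convex {F : Type} [NormedAddCommGroup F] [NormedSpace ℝ F] {C : Set F}
    (hC : Convex ℝ C) (hne : C.Nonempty) (n : ℕ) :
    VAcyc R C n := by
  intro δ hδ
  exact ⟨δ, hδ, fun c hc hz => convex_fill hC hne hδ hc hz⟩

def md (σ : Finset V) (hσ : σ.Nonempty) (y : V → ℝ) (v : V) : ℝ :=
  y v - if v ∈ σ then σ.inf' hσ y else 0

theorem md_continuous (σ : Finset V) (hσ : σ.Nonempty) : Continuous (md σ hσ) := by
  refine continuous_pi fun v => ?_
  unfold md
  refine (continuous_apply v).sub ?_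
  split_ifs
  · exact Continuous.finset_inf'_apply hσ (fun i _ => continuous_apply i)
  · exact continuous_const

def bar (σ : Finset V) (v : V) : ℝ := if v ∈ σ then (σ.card : ℝ)⁻¹ else 0

theorem bar_mem {σ : Finset V} (hσ : σ.Nonempty) : bar σ ∈ Dl σ := by
  have : (σ.card : ℝ) ≠ 0 := by simpa using hσ.ne_empty
  refine ⟨fun v => ?_, ?_, fun v hv => by simp [bar, hv]⟩
  · unfold bar; split_ifs <;> positivity
  · simp [bar, this]

/-- continuous stereographic data -/
theorem stereo_data {P : E} (hP : ‖P‖ = 1) {Q : Set E} (hQ : IsCompact Q)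
    (hQS : Q ⊆ Metric.sphere 0 1) (hPQ : P ∉ Q) :
    ∃ (F : Type) (_ : NormedAddCommGroup F) (_ : NormedSpace ℝ F) (B : Set F) (s : E → F) (t : F → E),
      IsCompact B ∧ Convex ℝ B ∧ B.Nonempty ∧ ContinuousOn s Q ∧ Continuous t ∧ Set.MapsTo s Q B ∧
      (∀ w, t w ∈ Metric.sphere 0 1) ∧ (∀ w, t w ≠ P) ∧ ∀ x ∈ Q, t (s x) = x := by
  have hs : ContinuousOn (stereoToFun P) Q := by
    refine continuousOn_stereoToFun.mono ?_
    intro x hx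
    have hx1 : ‖x‖ = 1 := by simpa using hQS hx
    intro h
    apply hPQ
    have : x = P := by
      have h' : inner ℝ P x = 1 := h
      exact ((inner_eq_one_iff_of_norm_eq_one hP hx1).1 h').symm
    rwa [← this]
  obtain ⟨ρ, hρ⟩ := (hQ.image_of_continuousOn hs).isBounded.subset_closedBall 0
  refine ⟨(Submodule.span ℝ {P})ᗮ, inferInstance, inferInstance, Metric.closedBall 0 (max ρ 0),
    stereoToFun P, fun w => (stereoInvFun hP w : E), isCompact_closedBall _ _,
    convex_closedBall _ _, ⟨0, by simp⟩, hs, ?_, ?_, ?_, ?_, ?_⟩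
  · exact continuous_subtype_val.comp (continuous_stereoInvFun hP)
  · intro x hx
    exact Metric.closedBall_subset_closedBall (le_max_left _ _) (hρ ⟨x, hx, rfl⟩)
  · intro w; exact (stereoInvFun hP w).2
  · intro w h
    exact stereoInvFun_ne_north_pole hP w (Subtype.ext h)
  · intro x hx
    have := stereo_left_inv hP (x := ⟨x, hQS hx⟩) (by
      intro h
      apply hPQ
      have h' : x = P := h
      rwa [← h'])
    exact congrArg Subtype.val this

/-- complement of an open star -/
def costar (X : Set (Finset V)) (σ : Finset V) : Set (Finset V) := {s | s ∈ X ∧ ¬ σ ⊆ s}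

theorem costar_lower {X : Set (Finset V)} (hX : IsLowerSet X) (σ : Finset V) :
    IsLowerSet (costar X σ) :=
  fun _ _ hst hs => ⟨hX hst hs.1, fun h => hs.2 (h.trans hst)⟩

theorem Bd_mono {A B : Set (Finset V)} (h : A ⊆ B) : Bd A ⊆ Bd B :=
  Set.biUnion_subset_biUnion_left h

theorem Bd_nonneg {A : Set (Finset V)} {y : V → ℝ} (h : y ∈ Bd A) : ∀ v, 0 ≤ y v := by
  simp only [Bd, Set.mem_iUnion] at h
  obtain ⟨s, hs, h⟩ := h
  exact h.1

theorem Bd_sum {A : Set (Finset V)} {y : V → ℝ} (h : y ∈ Bd A) : ∑ v, y v = 1 := by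
  simp only [Bd, Set.mem_iUnion] at h
  obtain ⟨s, hs, h⟩ := h
  exact h.2.1

theorem acyc_costar {X : Set (Finset V)} (hX : IsLowerSet X) (φ : SphHomeo X E)
    {σ : Finset V} (hσ : σ ∈ X) (hne : σ.Nonempty) (n : ℕ) : Acyc R (costar X σ) n := by
  have hsub : Bd (costar X σ) ⊆ Bd X := Bd_mono fun s hs => hs.1
  have hβ : bar σ ∈ Bd X := Dl_subset_Bd hσ (bar_mem hne)
  have hP : ‖φ.u (bar σ)‖ = 1 := by simpa using φ.mu hβ
  have hcard : (0 : ℝ) < σ.card := by exact_mod_cast hne.card_pos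
  have hQ : IsCompact (φ.u '' Bd (costar X σ)) :=
    (Bd_compact _).image_of_continuousOn (φ.hu.mono hsub)
  have hPQ : φ.u (bar σ) ∉ φ.u '' Bd (costar X σ) := by
    rintro ⟨y, hy, h⟩
    have h1 := congrArg φ.k h
    rw [φ.ku y (hsub hy), φ.ku _ hβ] at h1
    subst h1
    have h2 := psup_mem_of_Bd (costar_lower hX σ) hy
    apply h2.2
    intro v hv
    rw [mem_psup]
    simp [bar, hv, hne.card_pos]
  obtain ⟨F, i1, i2, B, s, t, hBc, hBconv, hBne, hs, ht, hsB, htS, htP, hts⟩ :=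
    stereo_data hP hQ (by rintro _ ⟨y, hy, rfl⟩; exact φ.mu (hsub hy)) hPQ
  refine transfer (E := F) (B := B) (u := s ∘ φ.u) (κ := fun b => md σ hne (φ.k (t b)))
    (costar_lower hX σ) hBc hBne ?_ ?_ ?_ ?_ ?_ ?_ (VAcyc_convex hBconv hBne n)
  · exact hs.comp (φ.hu.mono hsub) (Set.mapsTo_image _ _)
  · exact hsB.comp (Set.mapsTo_image _ _)
  · exact (md_continuous σ hne).comp_continuousOn
      (φ.hk.comp ht.continuousOn (fun b _ => htS b))
  · intro b _
    by_contra! h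
    have hy := φ.mkk (htS b)
    set y := φ.k (t b) with hyd
    have h1 : ∀ v ∈ σ, y v = σ.inf' hne y := by
      intro v hv
      refine le_antisymm ?_ (Finset.inf'_le _ hv)
      have := h v
      simp only [md, hv, if_true] at this
      linarith
    have h2 : ∀ v, v ∉ σ → y v = 0 := by
      intro v hv
      refine le_antisymm ?_ (Bd_nonneg hy v)
      have := h v
      simp only [md, hv, if_false] at this
      linarith
    have h3 : (σ.card : ℝ) * σ.inf' hne y = 1 := by
      have h4 := Bd_sum hy
      rw [← Finset.sum_subset (Finset.subset_univ σ) (fun v _ hv => h2 v hv),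
        Finset.sum_congr rfl h1] at h4
      simpa using h4
    have h5 : y = bar σ := by
      funext v
      by_cases hv : v ∈ σ
      · rw [h1 v hv]
        simp only [bar, hv, if_true]
        field_simp
        linarith
      · rw [h2 v hv]; simp [bar, hv]
    apply htP b
    rw [← h5, hyd, φ.uk _ (htS b)]
  · intro b _
    have hy := φ.mkk (htS b)
    set y := φ.k (t b) with hyd
    have hmin : 0 ≤ σ.inf' hne y := Finset.le_inf' _ _ fun v _ => Bd_nonneg hy v
    refine ⟨hX ?_ (psup_mem_of_Bd hX hy), ?_⟩
    · intro v hv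
      rw [mem_psup] at *
      unfold md at hv
      split_ifs at hv <;> linarith
    · intro hsub
      obtain ⟨v, hv, h⟩ := Finset.exists_mem_eq_inf' hne y
      have := hsub hv
      rw [mem_psup] at this
      simp [md, hv, h] at this
  · intro y hy v hv
    simp only [Function.comp] at hv
    rw [hts _ ⟨y, hy, rfl⟩, φ.ku y (hsub hy)] at hv
    have hmin : 0 ≤ σ.inf' hne y := Finset.le_inf' _ _ fun v _ => Bd_nonneg hy v
    unfold md at hv
    split_ifs at hv <;> linarith


def nu (x : E) : E := ‖x‖⁻¹ • x

theorem nu_norm {x : E} (h : x ≠ 0) : ‖nu x‖ = 1 := by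
  rw [nu, norm_smul, norm_inv, norm_norm, inv_mul_cancel₀ (norm_ne_zero_iff.2 h)]

theorem nu_dist {x y : E} (hx : 1 / 2 ≤ ‖x‖) (hy : 1 / 2 ≤ ‖y‖) :
    dist (nu x) (nu y) ≤ 4 * dist x y := by
  have hx0 : 0 < ‖x‖ := by linarith
  have hy0 : 0 < ‖y‖ := by linarith
  have h1 : nu x - nu y = ‖x‖⁻¹ • (x - y) + (‖x‖⁻¹ * (‖y‖ - ‖x‖) * ‖y‖⁻¹) • y := by
    have : ‖x‖⁻¹ * (‖y‖ - ‖x‖) * ‖y‖⁻¹ = ‖x‖⁻¹ - ‖y‖⁻¹ := by field_simp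
    rw [this, nu, nu, smul_sub, sub_smul]
    abel
  have hinv : ‖x‖⁻¹ ≤ 2 := by
    rw [inv_le_comm₀ hx0 two_pos]; linarith
  rw [dist_eq_norm, dist_eq_norm, h1]
  refine (norm_add_le _ _).trans ?_
  rw [norm_smul, norm_smul, norm_mul, norm_mul, norm_inv, norm_inv, norm_norm, norm_norm]
  have h2 : ‖x‖⁻¹ * ‖‖y‖ - ‖x‖‖ * ‖y‖⁻¹ * ‖y‖ = ‖x‖⁻¹ * ‖‖y‖ - ‖x‖‖ := by field_simp
  rw [h2]
  have h3 : ‖‖y‖ - ‖x‖‖ ≤ ‖x - y‖ := by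
    rw [norm_sub_rev x y]; exact abs_norm_sub_norm_le y x
  have : ‖x‖⁻¹ * ‖x - y‖ ≤ 2 * ‖x - y‖ := by gcongr
  have : ‖x‖⁻¹ * ‖‖y‖ - ‖x‖‖ ≤ 2 * ‖x - y‖ := by gcongr
  linarith

theorem exists_pole {S : Finset (List E)} {n : ℕ} (hS : ∀ l ∈ S, l.length = n)
    (hn : n < Module.finrank ℝ E) :
    ∃ P : E, ‖P‖ = 1 ∧ ∀ l ∈ S, P ∉ Submodule.span ℝ {x | x ∈ l} := by
  classical
  let T : Finset (Subspace ℝ E) := insert ⊥ (S.image fun l => Submodule.span ℝ {x | x ∈ l})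
  have hT : ⊤ ∉ T := by
    have hE : Nontrivial E := Module.nontrivial_of_finrank_pos (R := ℝ) (by omega)
    simp only [T, Finset.mem_insert, Finset.mem_image, not_or, not_exists, not_and]
    refine ⟨top_ne_bot, fun l hl h => ?_⟩
    have h1 : Module.finrank ℝ (Submodule.span ℝ {x | x ∈ l}) ≤ l.length := by
      have h2 : {x | x ∈ l} = (l.toFinset : Set E) := by ext; simp
      rw [h2]
      exact (finrank_span_finset_le_card _).trans (List.toFinset_card_le l)
    rw [h, finrank_top, hS l hl] at h1
    omega
  obtain ⟨x, hx⟩ := (Set.ne_univ_iff_exists_notMem _).1 (Subspace.biUnion_ne_univ_of_top_notMem hT)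
  simp only [Set.mem_iUnion, not_exists] at hx
  have hx0 : x ≠ 0 := by
    have := hx ⊥ (by simp [T])
    simpa using this
  refine ⟨nu x, nu_norm hx0, fun l hl h => ?_⟩
  refine hx (Submodule.span ℝ {x | x ∈ l}) (by simp only [T, Finset.mem_insert, Finset.mem_image]; exact Or.inr ⟨l, hl, rfl⟩) ?_
  have := Submodule.smul_mem _ ‖x‖ h
  rwa [nu, smul_smul, mul_inv_cancel₀ (norm_ne_zero_iff.2 hx0), one_smul] at this

theorem VAcyc_sphere {n : ℕ} (hn : n < Module.finrank ℝ E) :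
    VAcyc R (Metric.sphere (0 : E) 1) n := by
  intro δ hδ
  set δ₁ : ℝ := min (1 / 2) (δ / 4) with hδ₁
  have hδ₁0 : 0 < δ₁ := by positivity
  have hδ₁a : δ₁ ≤ 1 / 2 := min_le_left _ _
  have hδ₁b : δ₁ ≤ δ / 4 := min_le_right _ _
  refine ⟨δ₁, hδ₁0, fun c hc hz => ?_⟩
  have hcs : ∀ l ∈ c.support, l ∈ Li (Metric.sphere (0 : E) 1) n ∩ Fi δ₁ := by
    intro l hl
    exact Sp_iff.1 hc l (by simpa using hl)
  obtain ⟨P, hP, hPl⟩ := exists_pole (S := c.support) (fun l hl => (hcs l hl).1.1) hn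
  set T : Set E := ⋃ l ∈ c.support, (Submodule.span ℝ {x | x ∈ l} : Set E) with hT
  have hTc : IsClosed T := by
    refine Set.Finite.isClosed_biUnion c.support.finite_toSet ?_
    intro l _
    exact Submodule.closed_of_finiteDimensional _
  set Q : Set E := Metric.sphere 0 1 ∩ T with hQ
  have hQc : IsCompact Q := (isCompact_sphere _ _).inter_right hTc
  have hPQ : P ∉ Q := by
    rintro ⟨-, h⟩
    simp only [hT, Set.mem_iUnion] at h
    obtain ⟨l, hl, h⟩ := h
    exact hPl l hl h
  obtain ⟨F, i1, i2, B, s, t, hBc, hBconv, hBne, hs, ht, hsB, htS, htP, hts⟩ :=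
    stereo_data hP hQc Set.inter_subset_left hPQ
  obtain ⟨δ₃, hδ₃, ht3⟩ := uc_on hBc ht.continuousOn hδ
  obtain ⟨δ₄, hδ₄, hs4⟩ := uc_on hQc hs hδ₃
  obtain ⟨M, hM⟩ := exists_SdM (C := Set.univ) convex_univ (n := n) (c := c)
    (Sp_mono (show Li (Metric.sphere (0 : E) 1) n ∩ Fi δ₁ ⊆ Li Set.univ n from
      fun l hl => ⟨hl.1.1, by simp⟩) hc) (δ := δ₄ / 4) (by positivity)
  replace hM := hM M le_rfl
  set T' : Set E := {x | 1 / 2 ≤ ‖x‖} ∩ T with hT'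
  have key : ∀ l ∈ c.support, l ≠ [] → ∃ C : Set E, Convex ℝ C ∧ C ⊆ T' ∧ ∀ x ∈ l, x ∈ C := by
    intro l hl hne
    obtain ⟨x₀, hx₀⟩ := List.exists_mem_of_ne_nil l hne
    have hx1 : ‖x₀‖ = 1 := by simpa using (hcs l hl).1.2 x₀ hx₀
    refine ⟨(Submodule.span ℝ {x | x ∈ l} : Set E) ∩ Metric.closedBall x₀ (1 / 2),
      (Submodule.convex _).inter (convex_closedBall _ _), ?_, ?_⟩
    · rintro x ⟨h1, h2⟩
      refine ⟨?_, ?_⟩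
      · rw [Metric.mem_closedBall, dist_eq_norm] at h2
        have := norm_sub_norm_le x₀ x
        rw [norm_sub_rev] at this
        show 1 / 2 ≤ ‖x‖
        linarith
      · simp only [hT, Set.mem_iUnion]
        exact ⟨l, hl, h1⟩
    · intro x hx
      exact ⟨Submodule.subset_span hx, ((hcs l hl).2 x hx x₀ hx₀).trans hδ₁a⟩
  have hSdT : SdM M c ∈ Sp (R := R) (Li T' n) := by
    refine Sp_map ?_ (Sp_support c)
    intro l hl
    by_cases hne : l = []
    · subst hne
      rw [SdM_nil]
      exact sg_mem ⟨(hcs [] hl).1.1, by simp⟩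
    · obtain ⟨C, hC, hCT, hlC⟩ := key l hl hne
      refine Sp_mono ?_ (SdM_Li hC M (sg_mem ⟨(hcs l hl).1.1, hlC⟩))
      rintro m ⟨h1, h2⟩
      exact ⟨h1, fun x hx => hCT (h2 x hx)⟩
  have hHT : HM M c ∈ Sp (R := R) (Li T' (n + 1)) := by
    refine Sp_map ?_ (Sp_support c)
    intro l hl
    by_cases hne : l = []
    · subst hne
      have h1 := HM_Sp (R := R) (C := (∅ : Set E)) convex_empty M (c := sg []) (n := 0) (sg_mem ⟨rfl, by simp⟩)
      have h2 : HM M (sg [] : Ch R E) = 0 := by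
        have h3 := Sp_eq (F := LinearMap.id) (G := 0) ?_ h1
        · simpa using h3
        · rintro m ⟨h4, h5⟩
          cases m with
          | nil => simp at h4
          | cons a m => exact absurd (h5 a (by simp)) (by simp)
      rw [h2]
      exact zero_mem _
    · obtain ⟨C, hC, hCT, hlC⟩ := key l hl hne
      refine Sp_mono ?_ (HM_Sp hC M (sg_mem ⟨(hcs l hl).1.1, hlC⟩))
      rintro m ⟨h1, h2⟩
      exact ⟨h1, fun x hx => hCT (h2 x hx)⟩
  have hHF : HM M c ∈ Sp (R := R) (Fi δ₁) :=
    Sp_mono Set.inter_subset_right (HM_Fi (C := Set.univ) (n := n) convex_univ M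
      (Sp_mono (show Li (Metric.sphere (0 : E) 1) n ∩ Fi δ₁ ⊆ Li Set.univ n ∩ Fi δ₁ from
        fun l hl => ⟨⟨hl.1.1, by simp⟩, hl.2⟩) hc))
  have hνT : ∀ x ∈ T', nu x ∈ Q := by
    rintro x ⟨h1, h2⟩
    have h1' : 1 / 2 ≤ ‖x‖ := h1
    have hx0 : x ≠ 0 := by rintro rfl; norm_num at h1'
    refine ⟨by simpa using nu_norm hx0, ?_⟩
    simp only [hT, Set.mem_iUnion] at h2 ⊢
    obtain ⟨l, hl, h⟩ := h2
    exact ⟨l, hl, Submodule.smul_mem _ _ h⟩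
  have hc'' : push nu (SdM M c) ∈ Sp (R := R) (Li Q n ∩ Fi δ₄) := by
    refine push_Sp ?_ (Sp_inter hSdT hM)
    rintro m ⟨⟨h1, h2⟩, ⟨-, h3⟩⟩
    refine ⟨⟨by simp [h1], ?_⟩, ?_⟩
    · intro x hx
      obtain ⟨y, hy, rfl⟩ := List.mem_map.1 hx
      exact hνT y (h2 y hy)
    · intro x hx x' hx'
      obtain ⟨y, hy, rfl⟩ := List.mem_map.1 hx
      obtain ⟨y', hy', rfl⟩ := List.mem_map.1 hx'
      have := nu_dist (h2 y hy).1 (h2 y' hy').1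
      have := h3 y hy y' hy'
      linarith
  have hs'' : push s (push nu (SdM M c)) ∈ Sp (R := R) (Li B n ∩ Fi δ₃) := by
    refine push_Sp ?_ hc''
    rintro m ⟨⟨h1, h2⟩, h3⟩
    refine ⟨⟨by simp [h1], ?_⟩, ?_⟩
    · intro x hx
      obtain ⟨y, hy, rfl⟩ := List.mem_map.1 hx
      exact hsB (h2 y hy)
    · intro x hx x' hx'
      obtain ⟨y, hy, rfl⟩ := List.mem_map.1 hx
      obtain ⟨y', hy', rfl⟩ := List.mem_map.1 hx'
      exact (hs4 y (h2 y hy) y' (h2 y' hy') (h3 y hy y' hy')).le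
  obtain ⟨b, hb, hbb⟩ := convex_fill hBconv hBne hδ₃ hs''
    (by rw [← push_bd, ← push_bd, bd_SdM, hz]; simp)
  refine ⟨push t b + push nu (HM M c), add_mem (push_Sp ?_ hb) (push_Sp ?_ (Sp_inter hHT hHF)), ?_⟩
  · rintro m ⟨⟨h1, h2⟩, h3⟩
    refine ⟨⟨by simp [h1], ?_⟩, ?_⟩
    · intro x hx
      obtain ⟨y, hy, rfl⟩ := List.mem_map.1 hx
      exact htS y
    · intro x hx x' hx'
      obtain ⟨y, hy, rfl⟩ := List.mem_map.1 hx
      obtain ⟨y', hy', rfl⟩ := List.mem_map.1 hx'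
      exact (ht3 y (h2 y hy) y' (h2 y' hy') (h3 y hy y' hy')).le
  · rintro m ⟨⟨h1, h2⟩, h3⟩
    refine ⟨⟨by simp [h1], ?_⟩, ?_⟩
    · intro x hx
      obtain ⟨y, hy, rfl⟩ := List.mem_map.1 hx
      exact (hνT y (h2 y hy)).1
    · intro x hx x' hx'
      obtain ⟨y, hy, rfl⟩ := List.mem_map.1 hx
      obtain ⟨y', hy', rfl⟩ := List.mem_map.1 hx'
      have := nu_dist (h2 y hy).1 (h2 y' hy').1
      have := h3 y hy y' hy'
      linarith
  · have h1 : push t (push s (push nu (SdM M c))) = push nu (SdM M c) := by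
      rw [push_push]
      refine push_id_on (Sp_mono ?_ hc'')
      rintro m ⟨⟨h1, h2⟩, -⟩ x hx
      exact hts x (h2 x hx)
    have h2 : push nu c = c := by
      refine push_id_on (Sp_mono ?_ hc)
      rintro m ⟨⟨h1, h2⟩, -⟩ x hx
      have : ‖x‖ = 1 := by simpa using h2 x hx
      simp [nu, this]
    rw [map_add, ← push_bd, hbb, h1, SdM_eq, hz, map_sub, map_sub, h2, ← push_bd]
    simp

theorem acyc_sphere {X : Set (Finset V)} (hX : IsLowerSet X) (φ : SphHomeo X E) {n : ℕ}
    (hn : n < Module.finrank ℝ E) : Acyc R X n := by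
  have hE : Nontrivial E := Module.nontrivial_of_finrank_pos (R := ℝ) (by omega)
  refine transfer hX (isCompact_sphere (0 : E) 1) (NormedSpace.sphere_nonempty.2 zero_le_one)
    (u := φ.u) (κ := φ.k) φ.hu φ.mu φ.hk ?_ ?_ ?_ (VAcyc_sphere hn)
  · intro b hb
    by_contra! h
    have h1 := Bd_sum (φ.mkk hb)
    have h2 : ∑ v, φ.k b v ≤ 0 := Finset.sum_nonpos fun v _ => h v
    linarith
  · intro b hb
    exact psup_mem_of_Bd hX (φ.mkk hb)
  · intro y hy v hv
    rwa [φ.ku y hy] at hv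

end F5
end Tv

end

noncomputable section
namespace Tv
open Finsupp

section F6
variable {R : Type} [CommRing R] {V : Type} [DecidableEq V]

def rho (v : V) : Ch R V →ₗ[R] Ch R V := lin (fun l => if v ∈ l then 0 else sg l)

theorem rho_sg (v : V) (l : List V) : rho v (sg l : Ch R V) = if v ∈ l then 0 else sg l := by
  simp [rho]

theorem rho_cone_self (v : V) (c : Ch R V) : rho v (cone v c) = 0 :=
  hom_ext_apply (F := rho v ∘ₗ cone v) (G := 0) (by intro l; simp [rho_sg]) c

theorem rho_cone_ne {v a : V} (h : v ≠ a) (c : Ch R V) : rho v (cone a c) = cone a (rho v c) :=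
  hom_ext_apply (F := rho v ∘ₗ cone a) (G := cone a ∘ₗ rho v) (by
    intro l
    by_cases h' : v ∈ l <;> simp [rho_sg, h, h']) c

def lkp (v : V) : Ch R V →ₗ[R] Ch R V := rho v ∘ₗ bd - bd ∘ₗ rho v

theorem lkp_apply (v : V) (c : Ch R V) : lkp v c = rho v (bd c) - bd (rho v c) := rfl

theorem bd_lkp (v : V) (c : Ch R V) : bd (lkp v c) = - lkp v (bd c) := by
  simp [lkp_apply]

theorem lkp_nil (v : V) : lkp v (sg [] : Ch R V) = 0 := by simp [lkp_apply, rho_sg]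

theorem lkp_cons_self (v : V) (l : List V) : lkp v (sg (v :: l) : Ch R V) = rho v (sg l) := by
  rw [lkp_apply, bd_cons, map_sub, rho_cone_self, rho_sg v (v :: l)]
  simp

theorem lkp_cons_ne {v a : V} (h : v ≠ a) (l : List V) :
    lkp v (sg (a :: l) : Ch R V) = - cone a (lkp v (sg l)) := by
  rw [lkp_apply, bd_cons, map_sub, rho_cone_ne h, ← cone_sg, rho_cone_ne h, bd_cone, lkp_apply,
    map_sub]
  abel

theorem lkp_sub (v : V) (l : List V) :
    lkp v (sg l : Ch R V) ∈ Sp (R := R)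
      {m : List V | m.length + 1 = l.length ∧ m ⊆ l ∧ v ∈ l ∧ v ∉ m} := by
  induction l with
  | nil => simp [lkp_nil]
  | cons a l ih =>
    by_cases h : v = a
    · subst h
      rw [lkp_cons_self, rho_sg]
      split_ifs with h1
      · exact zero_mem _
      · exact sg_mem ⟨by simp, by simp, by simp, h1⟩
    · rw [lkp_cons_ne h]
      refine neg_mem (cone_Sp ?_ ih)
      rintro m ⟨h1, h2, h3, h4⟩
      refine ⟨by simp [h1], List.cons_subset_cons a h2, by simp [h3], by simp [h, h4]⟩

def Lkp : List V → (Ch R V →ₗ[R] Ch R V)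
  | [] => LinearMap.id
  | a :: s => Lkp s ∘ₗ lkp a

theorem bd_Lkp (s : List V) (c : Ch R V) : bd (Lkp s c) = (-1 : R) ^ s.length • Lkp s (bd c) := by
  induction s generalizing c with
  | nil => simp [Lkp]
  | cons a s ih =>
    simp only [Lkp, LinearMap.comp_apply, ih, bd_lkp, map_neg, List.length_cons, pow_succ]
    simp

theorem Lkp_sub (s l : List V) :
    Lkp s (sg l : Ch R V) ∈ Sp (R := R)
      {m : List V | m.length + s.length = l.length ∧ m ⊆ l ∧ ∀ x ∈ s, x ∈ l ∧ x ∉ m} := by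
  induction s generalizing l with
  | nil => exact sg_mem ⟨by simp, by simp, by simp⟩
  | cons a s ih =>
    simp only [Lkp, LinearMap.comp_apply]
    refine Sp_map ?_ (lkp_sub a l)
    rintro m ⟨h1, h2, h3, h4⟩
    refine Sp_mono ?_ (ih m)
    rintro k ⟨h5, h6, h7⟩
    refine ⟨by simp; omega, fun x hx => h2 (h6 hx), ?_⟩
    intro x hx
    rcases List.mem_cons.1 hx with rfl | hx
    · exact ⟨h3, fun h => h4 (h6 h)⟩
    · exact ⟨h2 (h7 x hx).1, (h7 x hx).2⟩

theorem Lkp_zero {s l : List V} {x : V} (hx : x ∈ s) (hl : x ∉ l) : Lkp s (sg l : Ch R V) = 0 := by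
  have := Sp_eq (F := LinearMap.id) (G := 0) ?_ (Lkp_sub (R := R) s l)
  · simpa using this
  · rintro m ⟨-, -, h⟩
    exact absurd (h x hx).1 hl

theorem Lkp_append {s l : List V} (hs : s.Nodup) (h : ∀ x ∈ s, x ∉ l) :
    Lkp s (sg (s ++ l) : Ch R V) = sg l := by
  induction s with
  | nil => simp [Lkp]
  | cons a s ih =>
    have h1 : a ∉ s ++ l := by
      simp only [List.mem_append, not_or]
      exact ⟨(List.nodup_cons.1 hs).1, h a (by simp)⟩
    simp only [Lkp, LinearMap.comp_apply, List.cons_append, lkp_cons_self, rho_sg, h1, if_false]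
    exact ih (List.nodup_cons.1 hs).2 (fun x hx => h x (by simp [hx]))

variable [Fintype V]

/-- lists in the link of `s`, avoiding `v` -/
def LkS (X : Set (Finset V)) (s : List V) (n : ℕ) : Set (List V) :=
  {l | l.length = n ∧ s.toFinset ∪ l.toFinset ∈ X ∧ ∀ x ∈ s, x ∉ l}

/-- solving ∂y = ∂s ++ z in the costar -/
theorem exists_y {X : Set (Finset V)} (hX : IsLowerSet X)
    (hb : ∀ σ ∈ X, σ.Nonempty → ∀ n, Acyc R (costar X σ) n)
    {s : List V} (hs : s.Nodup) (hsX : s.toFinset ∈ X) {n : ℕ} {z : Ch R V}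
    (hz : z ∈ Sp (LkS X s n)) (hbz : bd z = 0) :
    ∃ y ∈ Sp (R := R) (La (costar X s.toFinset) (s.length + n)), bd y = cat (bd (sg s)) z := by
  by_cases h0 : s = []
  · subst h0
    exact ⟨0, zero_mem _, by simp⟩
  have hlen : 0 < s.length := List.length_pos_iff.2 h0
  have hm : cat (bd (sg s)) z ∈ Sp (R := R) (La (costar X s.toFinset) (s.length - 1 + n)) := by
    refine cat_Sp ?_ (bd_sub s) hz
    rintro m ⟨h1, h2⟩ l ⟨h3, h4, h5⟩
    refine ⟨by simp [h3]; omega, ?_, ?_⟩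
    · refine hX ?_ h4
      rw [List.toFinset_append]
      apply Finset.union_subset_union_left
      intro x hx
      simpa using h2.subset (by simpa using hx)
    · intro hsub
      have h6 : s.toFinset ⊆ m.toFinset := by
        intro x hx
        have := hsub hx
        simp only [List.toFinset_append, Finset.mem_union, List.mem_toFinset] at this hx ⊢
        exact this.resolve_right (h5 x hx)
      have h7 := Finset.card_le_card h6
      rw [List.toFinset_card_of_nodup hs] at h7
      have := List.toFinset_card_le m
      omega
  have hcyc : bd (cat (bd (sg s)) z) = 0 := by
    rw [bd_cat (n := s.length - 1) (Sp_mono ?_ (bd_sub s)), bd_bd, hbz]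
    · simp
    · rintro m ⟨h1, -⟩
      show m.length = _
      omega
  obtain ⟨y, hy, h⟩ := hb s.toFinset hsX (by simpa using h0) _ _ hm hcyc
  refine ⟨y, ?_, h⟩
  have : s.length - 1 + n + 1 = s.length + n := by omega
  rwa [this] at hy

theorem Lkp_costar {X : Set (Finset V)} {s : List V} {n : ℕ} {y : Ch R V}
    (hy : y ∈ Sp (La (costar X s.toFinset) n)) : Lkp s y = 0 := by
  refine Sp_eq (G := 0) ?_ hy
  rintro l ⟨-, -, h⟩
  obtain ⟨x, hx, hxl⟩ := Finset.not_subset.1 h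
  rw [Lkp_zero (x := x) (by simpa using hx) (by simpa using hxl)]
  rfl

theorem Lkp_cat {X : Set (Finset V)} {s : List V} (hs : s.Nodup) {n : ℕ} {z : Ch R V}
    (hz : z ∈ Sp (LkS X s n)) : Lkp s (cat (sg s) z) = z := by
  refine Sp_eq (F := Lkp s ∘ₗ cat (sg s)) (G := LinearMap.id) ?_ hz
  rintro l ⟨-, -, h⟩
  simp [Lkp_append hs h]

theorem link_fill {X : Set (Finset V)} (hX : IsLowerSet X)
    (hb : ∀ σ ∈ X, σ.Nonempty → ∀ n, Acyc R (costar X σ) n)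
    {s : List V} {v : V} (hs : (v :: s).Nodup) (hsX : (v :: s).toFinset ∈ X) {n : ℕ} {z : Ch R V}
    (hz : z ∈ Sp (LkS X s n ∩ {l | v ∉ l})) (hbz : bd z = 0) :
    ∃ w ∈ Sp (R := R) (LkS X s (n + 1) ∩ {l | v ∉ l}), bd w = z := by
  have hs' := (List.nodup_cons.1 hs).2
  have hvs := (List.nodup_cons.1 hs).1
  have hsub : s.toFinset ⊆ (v :: s).toFinset := by intro x; simp; tauto
  have hz' := Sp_mono Set.inter_subset_left hz
  obtain ⟨y, hy, hyb⟩ := exists_y hX hb hs' (hX hsub hsX) hz' hbz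
  have h1 : cat (sg s) z - y ∈ Sp (R := R) (La (costar X (v :: s).toFinset) (s.length + n)) := by
    refine sub_mem (cat_Sp (s := {s}) ?_ (sg_mem rfl) hz) (Sp_mono ?_ hy)
    · rintro k hk l ⟨⟨h1, h2, h3⟩, h4⟩
      rw [show k = s from hk]
      refine ⟨by simp [h1], by simpa using h2, fun h => ?_⟩
      have := h (show v ∈ (v :: s).toFinset by simp)
      simp only [List.toFinset_append, Finset.mem_union, List.mem_toFinset] at this
      exact this.elim hvs h4
    · rintro l ⟨h1, h2, h3⟩
      exact ⟨h1, h2, fun h => h3 (hsub.trans h)⟩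
  have h2 : bd (cat (sg s) z - y) = 0 := by
    rw [map_sub, hyb, bd_cat_sg, hbz]; simp
  obtain ⟨x, hx, hxb⟩ := hb _ hsX ⟨v, by simp⟩ _ _ h1 h2
  refine ⟨(-1 : R) ^ s.length • Lkp s x, Submodule.smul_mem _ _ (Sp_map ?_ hx), ?_⟩
  · rintro l ⟨h1, h2, h3⟩
    refine Sp_mono ?_ (Lkp_sub s l)
    rintro m ⟨h4, h5, h6⟩
    refine ⟨⟨by omega, hX ?_ h2, fun x hx => (h6 x hx).2⟩, ?_⟩
    · intro x hx
      simp only [Finset.mem_union, List.mem_toFinset] at hx ⊢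
      exact hx.elim (fun h => (h6 x h).1) (fun h => h5 h)
    · intro hv
      apply h3
      intro x hx
      simp only [List.mem_toFinset, List.mem_cons] at hx ⊢
      rcases hx with rfl | hx
      · exact h5 hv
      · exact (h6 x hx).1
  · rw [map_smul, bd_Lkp, hxb, map_sub, Lkp_costar hy, Lkp_cat hs' hz', sub_zero, smul_smul,
      ← mul_pow]
    simp

theorem exists_flag [Nontrivial R] {X : Set (Finset V)} (hX : IsLowerSet X) (h0 : ∅ ∈ X)
    (hb : ∀ σ ∈ X, σ.Nonempty → ∀ n, Acyc R (costar X σ) n) {N : ℕ}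
    (ha : ∀ n < N, Acyc R X n) :
    ∀ k ≤ N, ∃ s : List V, s.Nodup ∧ s.length = k ∧ s.toFinset ∈ X := by
  intro k
  induction k with
  | zero => intro _; exact ⟨[], by simp, rfl, by simpa using h0⟩
  | succ k ih =>
    intro hk
    obtain ⟨s, hs, hsk, hsX⟩ := ih (by omega)
    by_contra hcon
    push Not at hcon
    have hz : (sg [] : Ch R V) ∈ Sp (LkS X s 0) := sg_mem ⟨rfl, by simpa using hsX, by simp⟩
    obtain ⟨y, hy, hyb⟩ := exists_y hX hb hs hsX hz (by simp)
    rw [cat_nil_right] at hyb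
    have h1 : sg s - y ∈ Sp (R := R) (La X k) := by
      refine sub_mem (sg_mem ⟨hsk, hsX⟩) (Sp_mono ?_ hy)
      rintro l ⟨h1, h2, -⟩
      exact ⟨by omega, h2⟩
    obtain ⟨x, hx, hxb⟩ := ha k (by omega) _ h1 (by rw [map_sub, hyb, sub_self])
    have h2 : Lkp s x = 0 := by
      refine Sp_eq (G := 0) ?_ hx
      rintro l ⟨h1, h2⟩
      have := Sp_eq (F := LinearMap.id) (G := 0) ?_ (Lkp_sub (R := R) s l)
      · simpa using this
      rintro m ⟨h4, h5, h6⟩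
      exfalso
      have h7 : m.length = 1 := by omega
      obtain ⟨v, rfl⟩ := List.length_eq_one_iff.1 h7
      refine hcon (v :: s) ?_ (by simp [hsk]) (hX ?_ h2)
      · refine List.nodup_cons.2 ⟨fun h => ?_, hs⟩
        exact (h6 v h).2 (by simp)
      · intro x hx
        simp only [List.mem_toFinset, List.mem_cons] at hx ⊢
        rcases hx with rfl | hx
        · exact h5 (by simp)
        · exact (h6 x hx).1
    have h3 := bd_Lkp s x
    rw [h2, hxb, map_zero, map_sub, Lkp_costar hy, sub_zero] at h3
    have h4 : Lkp s (sg s : Ch R V) = sg [] := by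
      have := Lkp_append (R := R) (l := []) hs (by simp)
      simpa using this
    rw [h4] at h3
    have h5 := congrArg (fun c => (-1 : R) ^ s.length • c) h3
    simp only [smul_smul, ← mul_pow] at h5
    have h6 := DFunLike.congr_fun h5 []
    simp [sg] at h6

structure FlagData (R : Type) [CommRing R] (X : Set (Finset V)) (N : ℕ) where
  v : ℕ → V
  ρ : ℕ → Ch R V
  w : ℕ → Ch R V
  inj : ∀ i < N, ∀ j < N, v i = v j → i = j
  face : (Finset.range N).image v ∈ X
  ρN : ρ N = sg []
  bdw : ∀ m < N, bd (w m) = ρ (m + 1)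
  wS : ∀ m < N, w m ∈ Sp (R := R) {l | l.length = N - m ∧ (Finset.range m).image v ∪ l.toFinset ∈ X ∧
    ∀ i ≤ m, v i ∉ l}
  ρs : ∀ m < N, ρ m = cat (ρ (m + 1)) (sg [v m]) + (-1 : R) ^ (N - m) • w m
  bdρ : bd (ρ 0) = 0
  ρ0 : ρ 0 ∈ Sp (R := R) (La X N)

theorem exists_flagData [Nontrivial R] {X : Set (Finset V)} (hX : IsLowerSet X) (h0 : ∅ ∈ X)
    (hb : ∀ σ ∈ X, σ.Nonempty → ∀ n, Acyc R (costar X σ) n) {N : ℕ} (hN : 0 < N)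
    (ha : ∀ n < N, Acyc R X n) : Nonempty (FlagData R X N) := by
  obtain ⟨f, hf, hfN, hfX⟩ := exists_flag hX h0 hb ha N le_rfl
  have : Nonempty V := by
    have : f ≠ [] := by rintro rfl; simp at hfN; omega
    obtain ⟨x, -⟩ := List.exists_mem_of_ne_nil f this
    exact ⟨x⟩
  obtain ⟨v₀⟩ := this
  let v : ℕ → V := fun i => f.getD i v₀
  have hv : ∀ i (h : i < N), v i = f[i] := fun i h => by simp [v, hfN, h]
  have inj : ∀ i < N, ∀ j < N, v i = v j → i = j := by
    intro i hi j hj h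
    rw [hv i hi, hv j hj] at h
    exact (hf.getElem_inj_iff).1 h
  have face : (Finset.range N).image v ∈ X := by
    refine hX ?_ hfX
    intro x hx
    simp only [Finset.mem_image, Finset.mem_range] at hx
    obtain ⟨i, hi, rfl⟩ := hx
    rw [hv i hi]
    simp
  let s : ℕ → List V := fun m => (List.range m).map v
  have hsF : ∀ m, (s m).toFinset = (Finset.range m).image v := by
    intro m; ext x; simp [s]
  have hsucc : ∀ m, (s (m + 1)).toFinset = (v m :: s m).toFinset := by
    intro m; ext x
    simp only [s, List.range_succ, List.map_append, List.mem_toFinset, List.mem_append]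
    simp [or_comm]
  have hsnd : ∀ m ≤ N, (s m).Nodup := by
    intro m hm
    refine (List.nodup_map_iff_inj_on List.nodup_range).2 ?_
    intro i hi j hj h
    simp only [List.mem_range] at hi hj
    exact inj i (by omega) j (by omega) h
  have hvs : ∀ m < N, v m ∉ s m := by
    intro m hm h
    simp only [s, List.mem_map, List.mem_range] at h
    obtain ⟨i, hi, h⟩ := h
    have := inj i (by omega) m hm h
    omega
  have hfaces : ∀ m ≤ N, (s m).toFinset ∈ X := by
    intro m hm
    rw [hsF]
    exact hX (Finset.image_subset_image (Finset.range_mono hm)) face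
  have hfill : ∀ m, ∀ z : Ch R V, ∃ w : Ch R V, m < N → z ∈ Sp (LkS X (s (m + 1)) (N - (m + 1))) →
      bd z = 0 → w ∈ Sp (R := R) (LkS X (s m) (N - m) ∩ {l | v m ∉ l}) ∧ bd w = z := by
    intro m z
    by_cases h : m < N ∧ z ∈ Sp (LkS X (s (m + 1)) (N - (m + 1))) ∧ bd z = 0
    · obtain ⟨h1, h2, h3⟩ := h
      have hzz : z ∈ Sp (R := R) (LkS X (s m) (N - (m + 1)) ∩ {l | v m ∉ l}) := by
        refine Sp_mono ?_ h2
        rintro l ⟨h4, h5, h6⟩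
        refine ⟨⟨h4, hX ?_ h5, fun x hx => h6 x ?_⟩, h6 _ ?_⟩
        · apply Finset.union_subset_union_left
          rw [hsucc]; intro x; simp; tauto
        · have : x ∈ (s (m + 1)).toFinset := by rw [hsucc]; simp [hx]
          simpa using this
        · have : v m ∈ (s (m + 1)).toFinset := by rw [hsucc]; simp
          simpa using this
      obtain ⟨w, hw, hwb⟩ := link_fill hX hb (s := s m) (v := v m)
        (List.nodup_cons.2 ⟨hvs m h1, hsnd m h1.le⟩) (by rw [← hsucc]; exact hfaces _ h1)
        (n := N - (m + 1)) (z := z) hzz h3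
      refine ⟨w, fun _ _ _ => ⟨?_, hwb⟩⟩
      have : N - (m + 1) + 1 = N - m := by omega
      rwa [this] at hw
    · exact ⟨0, fun h1 h2 h3 => absurd ⟨h1, h2, h3⟩ h⟩
  choose W hW using hfill
  let r : ℕ → Ch R V := fun j => Nat.rec (sg []) (fun j c =>
    cat c (sg [v (N - 1 - j)]) + (-1 : R) ^ (j + 1) • W (N - 1 - j) c) j
  have hr0 : r 0 = sg [] := rfl
  have hrs : ∀ j, r (j + 1) = cat (r j) (sg [v (N - 1 - j)]) +
    (-1 : R) ^ (j + 1) • W (N - 1 - j) (r j) := fun j => rfl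
  let ρ : ℕ → Ch R V := fun m => r (N - m)
  have hρN : ρ N = sg [] := by simp [ρ, hr0]
  have hρs : ∀ m < N, ρ m = cat (ρ (m + 1)) (sg [v m]) + (-1 : R) ^ (N - m) • W m (ρ (m + 1)) := by
    intro m hm
    have h1 : N - m = (N - (m + 1)) + 1 := by omega
    have h2 : N - 1 - (N - (m + 1)) = m := by omega
    simp only [ρ]
    rw [h1, hrs, h2]
  have hmain : ∀ j ≤ N, ρ (N - j) ∈ Sp (R := R) (LkS X (s (N - j)) j) ∧ bd (ρ (N - j)) = 0 := by
    intro j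
    induction j with
    | zero =>
      intro _
      simp only [Nat.sub_zero, hρN]
      exact ⟨sg_mem ⟨rfl, by simpa using hfaces N le_rfl, by simp⟩, by simp⟩
    | succ j ih =>
      intro hj
      obtain ⟨i1, i2⟩ := ih (by omega)
      obtain ⟨m, hm, hmj⟩ : ∃ m, N - (j + 1) = m ∧ N - j = m + 1 := ⟨_, rfl, by omega⟩
      have hj' : j = N - (m + 1) := by omega
      rw [hmj] at i1 i2
      rw [hm, hρs m (by omega)]
      have hw := hW m (ρ (m + 1)) (by omega) (hj' ▸ i1) i2
      have hNm : N - m = j + 1 := by omega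
      constructor
      · refine add_mem ?_ (Submodule.smul_mem _ _ (Sp_mono ?_ hw.1))
        · refine cat_Sp ?_ i1 (sg_mem (s := {[v m]}) rfl)
          rintro l ⟨h1, h2, h3⟩ _ rfl
          refine ⟨by simp [h1], hX ?_ h2, ?_⟩
          · rw [hsucc]
            intro x
            simp
          · intro x hx
            have h4 : x ∈ (s (m + 1)).toFinset := by rw [hsucc]; simp [hx]
            have h5 := h3 x (by simpa using h4)
            have : x ≠ v m := by rintro rfl; exact hvs m (by omega) hx
            simp [h5, this]
        · rw [hNm]; exact Set.inter_subset_left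
      · rw [map_add, map_smul, hw.2, bd_cat (n := j) (Sp_mono (fun l hl => hl.1) i1), i2, bd_cons, hNm]
        simp [pow_succ, cat_nil_right]
  have hz : ∀ m < N, ρ (m + 1) ∈ Sp (R := R) (LkS X (s (m + 1)) (N - (m + 1))) ∧ bd (ρ (m + 1)) = 0 := by
    intro m hm
    have := hmain (N - (m + 1)) (by omega)
    have h1 : N - (N - (m + 1)) = m + 1 := by omega
    rwa [h1] at this
  have hw : ∀ m < N, _ := fun m hm => hW m (ρ (m + 1)) hm (hz m hm).1 (hz m hm).2
  have h00 := hmain N le_rfl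
  simp only [Nat.sub_self] at h00
  refine ⟨⟨v, ρ, fun m => W m (ρ (m + 1)), inj, face, hρN, fun m hm => (hw m hm).2,
    fun m hm => Sp_mono ?_ (hw m hm).1, hρs, h00.2, Sp_mono ?_ h00.1⟩⟩
  · rintro l ⟨⟨h1, h2, h3⟩, h4⟩
    refine ⟨h1, by rwa [← hsF], fun i hi => ?_⟩
    rcases hi.lt_or_eq with hi | rfl
    · exact h3 _ (by simp only [s, List.mem_map, List.mem_range]; exact ⟨i, hi, rfl⟩)
    · exact h4
  · rintro l ⟨h1, h2, -⟩
    exact ⟨h1, by simpa [s] using h2⟩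

end F6
end Tv

end

noncomputable section
namespace Tv
open Finsupp

section F7a
variable {K : Type} [Field K]

/-- translation of colours -/
def tr {A : Type} (g : K) : A × K → A × K := fun x => (x.1, g + x.2)

theorem tr_tr {A : Type} (g h : K) : (tr g : A × K → A × K) ∘ tr h = tr (g + h) := by
  ext x <;> simp [tr, add_assoc]

theorem tr_zero {A : Type} : (tr (0 : K) : A × K → A × K) = id := by
  ext x <;> simp [tr]

theorem tr_inj {A : Type} (g : K) : Function.Injective (tr g : A × K → A × K) := by
  rintro ⟨a, b⟩ ⟨c, d⟩ h
  simpa [tr] using h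

/-- the translation action on chains -/
def T {A : Type} (g : K) : Module.End K (Ch K (A × K)) := push (tr g)

theorem T_sg {A : Type} (g : K) (l : List (A × K)) : T g (sg l : Ch K (A × K)) = sg (l.map (tr g)) := by
  simp [T]

theorem T_mul {A : Type} (g h : K) : (T g : Module.End K (Ch K (A × K))) * T h = T (g + h) := by
  refine LinearMap.ext fun c => ?_
  simp [T, Module.End.mul_apply, push_push, tr_tr]

theorem T_zero {A : Type} : (T 0 : Module.End K (Ch K (A × K))) = 1 := by
  refine hom_ext fun l => ?_
  simp [T, tr_zero]

theorem T_comm {A : Type} (g h : K) : Commute (T g : Module.End K (Ch K (A × K))) (T h) := by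
  unfold Commute SemiconjBy
  rw [T_mul, T_mul, add_comm]

theorem T_pow {A : Type} (g : K) (n : ℕ) : (T g : Module.End K (Ch K (A × K))) ^ n = T (n • g) := by
  induction n with
  | zero => simp [T_zero]
  | succ n ih => rw [pow_succ, ih, T_mul, succ_nsmul]

theorem T_bd {A : Type} (g : K) (c : Ch K (A × K)) : T g (bd c) = bd (T g c) := push_bd _ _

theorem sum_pow_char_comm {A ι : Type} [Ring A] (p : ℕ) [Fact p.Prime] [CharP A p]
    (s : Finset ι) (f : ι → A) (h : ∀ i j, Commute (f i) (f j)) :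
    (∑ i ∈ s, f i) ^ p = ∑ i ∈ s, f i ^ p := by
  classical
  induction s using Finset.induction_on with
  | empty => simp [(Fact.out : p.Prime).ne_zero]
  | insert a s ha ih =>
    rw [Finset.sum_insert ha, Finset.sum_insert ha, ← ih]
    exact add_pow_char_of_commute p (Commute.sum_right _ _ _ fun j _ => h a j)

instance instCharPEnd {M : Type} [AddCommGroup M] [Module K M] [Nontrivial M] (p : ℕ) [CharP K p] :
    CharP (Module.End K M) p :=
  charP_of_injective_algebraMap (FaithfulSMul.algebraMap_injective K (Module.End K M)) p

variable {ι : Type} [Fintype ι] (b : ι → K)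

def Xo {A : Type} : Module.End K (Ch K (A × K)) := ∑ i, b i • (T (b i) - 1)

theorem Xo_apply {A : Type} (c : Ch K (A × K)) : Xo b c = ∑ i, b i • (T (b i) c - c) := by
  simp [Xo, LinearMap.sum_apply]

theorem Xo_bd {A : Type} (c : Ch K (A × K)) : Xo b (bd c) = bd (Xo b c) := by
  simp [Xo_apply, T_bd, map_sum]

theorem Xo_pow_bd {A : Type} (n : ℕ) (c : Ch K (A × K)) :
    (Xo b ^ n) (bd c) = bd ((Xo b ^ n) c) := by
  induction n generalizing c with
  | zero => simp
  | succ n ih => simp only [pow_succ, Module.End.mul_apply, Xo_bd, ih]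

theorem Xo_nil {A : Type} : Xo b (sg [] : Ch K (A × K)) = 0 := by
  simp [Xo_apply, T_sg]

theorem alg_pow_p {B : Type} [Ring B] [Algebra K B] (p : ℕ) [Fact p.Prime] [CharP B p]
    (t : ι → B) (ht : ∀ i j, Commute (t i) (t j)) (hp : ∀ i, t i ^ p = 1) :
    (∑ i, b i • (t i - 1)) ^ p = 0 := by
  rw [sum_pow_char_comm p]
  · apply Finset.sum_eq_zero
    intro i _
    rw [smul_pow, sub_pow_char_of_commute p (Commute.one_right _), hp, one_pow]
    simp
  · intro i j
    refine Commute.smul_left (Commute.smul_right ?_ _) _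
    exact ((ht _ _).sub_right (Commute.one_right _)).sub_left
      (Commute.one_left _)

theorem Xo_pow_p {A : Type} (p : ℕ) [Fact p.Prime] [CharP K p] :
    (Xo b : Module.End K (Ch K (A × K))) ^ p = 0 := by
  have : Nontrivial (Ch K (A × K)) := inferInstance
  refine alg_pow_p b p (fun i => T (b i)) (fun i j => T_comm _ _) (fun i => ?_)
  rw [T_pow]
  simp [T_zero]

theorem Xo_Sp {A : Type} {s : Set (List (A × K))} (hs : ∀ g, ∀ l ∈ s, l.map (tr g) ∈ s)
    {c : Ch K (A × K)} (hc : c ∈ Sp s) : Xo b c ∈ Sp s := by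
  rw [Xo_apply]
  exact sum_mem fun i _ => Submodule.smul_mem _ _ (sub_mem (push_Sp (hs _) hc) hc)

theorem Xo_pow_Sp {A : Type} {s : Set (List (A × K))} (hs : ∀ g, ∀ l ∈ s, l.map (tr g) ∈ s) (n : ℕ)
    {c : Ch K (A × K)} (hc : c ∈ Sp s) : (Xo b ^ n) c ∈ Sp s := by
  induction n with
  | zero => simpa
  | succ n ih => rw [pow_succ', Module.End.mul_apply]; exact Xo_Sp b hs ih

end F7a

section F7b
variable {K : Type} [Field K] [DecidableEq K] {V : Type} [Fintype V] [DecidableEq V]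

def cls (s : Finset (Option V × K)) (c : K) : Finset V := Finset.univ.filter (fun v => (some v, c) ∈ s)

theorem mem_cls {s : Finset (Option V × K)} {c : K} {v : V} : v ∈ cls s c ↔ (some v, c) ∈ s := by
  simp [cls]

def YY (X : Set (Finset V)) : Set (Finset (Option V × K)) :=
  {s | (∀ c, cls s c ∈ X) ∧ (((∀ a ∈ s, a.1 ≠ none) ∧
    (∀ v c c', (some v, c) ∈ s → (some v, c') ∈ s → c = c')) ∨ ∃ c, ∀ a ∈ s, a.2 = c)}

theorem YY_lower {X : Set (Finset V)} (hX : IsLowerSet X) : IsLowerSet (YY (K := K) X) := by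
  rintro s t hts ⟨h1, h2⟩
  refine ⟨fun c => hX ?_ (h1 c), ?_⟩
  · intro v hv
    rw [mem_cls] at *
    exact hts hv
  · rcases h2 with ⟨h2, h3⟩ | ⟨c, h2⟩
    · exact Or.inl ⟨fun a ha => h2 a (hts ha), fun v c c' h h' => h3 v c c' (hts h) (hts h')⟩
    · exact Or.inr ⟨c, fun a ha => h2 a (hts ha)⟩

theorem mem_map_tr {A : Type} {g : K} {l : List (A × K)} {a : A} {c : K} :
    (a, c) ∈ l.map (tr g) ↔ (a, c - g) ∈ l := by
  simp only [List.mem_map, tr, Prod.mk.injEq]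
  constructor
  · rintro ⟨⟨x, y⟩, h, rfl, rfl⟩
    simpa using h
  · intro h
    exact ⟨_, h, rfl, by simp⟩

theorem YY_tr {X : Set (Finset V)} (g : K) {l : List (Option V × K)} (h : l.toFinset ∈ YY (K := K) X) :
    (l.map (tr g)).toFinset ∈ YY (K := K) X := by
  obtain ⟨h1, h2⟩ := h
  refine ⟨fun c => ?_, ?_⟩
  · convert h1 (c - g) using 1
    ext v
    rw [mem_cls, mem_cls, List.mem_toFinset, List.mem_toFinset, mem_map_tr]
  · rcases h2 with ⟨h2, h3⟩ | ⟨c, h2⟩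
    · left
      constructor
      · rintro ⟨o, c⟩ ha
        rw [List.mem_toFinset, mem_map_tr] at ha
        exact h2 (o, c - g) (by simpa using ha)
      · intro v c c' h h'
        rw [List.mem_toFinset, mem_map_tr] at h h'
        have := h3 v (c - g) (c' - g) (by simpa using h) (by simpa using h')
        simpa using this
    · right
      refine ⟨c + g, ?_⟩
      rintro ⟨o, c'⟩ ha
      rw [List.mem_toFinset, mem_map_tr] at ha
      have := h2 (o, c' - g) (by simpa using ha)
      simp only at this ⊢
      rw [← this]; ring

variable {X : Set (Finset V)} {N : ℕ} (D : FlagData K X N)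

def col : V → Option V × K := fun v => (some v, 0)

def Wd : ℕ → List (Option V × K) → Prop
  | 0, l => l = []
  | m + 1, l => Wd m l ∨ ∃ c l', l = (some (D.v m), c) :: l' ∧ Wd m l'

def Psi : ℕ → List (Option V × K) → Ch K (Option V × K)
  | 0, _ => cone (none, 0) (push col (D.ρ 0))
  | m + 1, [] => push col (D.w m)
  | m + 1, a :: l' => if a = (some (D.v m), 0) then Psi m l' else cat (push col (D.w m)) (sg (a :: l'))

theorem Wd_nil (m : ℕ) : Wd D m [] := by
  induction m with
  | zero => rfl
  | succ m ih => exact Or.inl ih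

theorem Wd_idx {m : ℕ} {l : List (Option V × K)} (h : Wd D m l) : ∀ a ∈ l, ∃ i < m, a.1 = some (D.v i) := by
  induction m generalizing l with
  | zero => rw [show l = [] from h]; simp
  | succ m ih =>
    rcases h with h | ⟨c, l', rfl, h⟩
    · intro a ha
      obtain ⟨i, hi, h'⟩ := ih h a ha
      exact ⟨i, by omega, h'⟩
    · intro a ha
      rcases List.mem_cons.1 ha with rfl | ha
      · exact ⟨m, by omega, rfl⟩
      obtain ⟨i, hi, h'⟩ := ih h a ha
      exact ⟨i, by omega, h'⟩

theorem Wd_not_mem {m : ℕ} (hm : m < N) {l : List (Option V × K)} (h : Wd D m l) (c : K) :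
    (some (D.v m), c) ∉ l := by
  intro hl
  obtain ⟨i, hi, h'⟩ := Wd_idx D h _ hl
  have := D.inj m hm i (by omega) (by simpa using h')
  omega

theorem Wd_fun {m : ℕ} (hm : m ≤ N) {l : List (Option V × K)} (h : Wd D m l) :
    ∀ o c c', (o, c) ∈ l → (o, c') ∈ l → c = c' := by
  induction m generalizing l with
  | zero => rw [show l = [] from h]; simp
  | succ m ih =>
    rcases h with h | ⟨c, l', rfl, h⟩
    · exact ih (by omega) h
    · intro o d d' h1 h2
      have hn := Wd_not_mem D (by omega) h
      rcases List.mem_cons.1 h1 with e1 | h1 <;> rcases List.mem_cons.1 h2 with e2 | h2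
      · simp only [Prod.mk.injEq] at e1 e2; rw [e1.2, e2.2]
      · simp only [Prod.mk.injEq] at e1; rw [e1.1] at h2; exact absurd h2 (hn _)
      · simp only [Prod.mk.injEq] at e2; rw [e2.1] at h1; exact absurd h1 (hn _)
      · exact ih (by omega) h o d d' h1 h2

theorem Wd_len {m : ℕ} {l : List (Option V × K)} (h : Wd D m l) : l.length ≤ m := by
  induction m generalizing l with
  | zero => rw [show l = [] from h]; simp
  | succ m ih =>
    rcases h with h | ⟨c, l', rfl, h⟩
    · have := ih h; omega
    · have := ih h; simp; omega

theorem Wd_tr {m : ℕ} {l : List (Option V × K)} (h : Wd D m l) (g : K) : Wd D m (l.map (tr g)) := by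
  induction m generalizing l with
  | zero => rw [show l = [] from h]; rfl
  | succ m ih =>
    rcases h with h | ⟨c, l', rfl, h⟩
    · exact Or.inl (ih h)
    · exact Or.inr ⟨g + c, _, rfl, ih h⟩

theorem Wd_sub {m : ℕ} {l k : List (Option V × K)} (h : Wd D m l) (hk : k.Sublist l) : Wd D m k := by
  induction m generalizing l k with
  | zero => rw [show l = [] from h] at hk; exact List.sublist_nil.1 hk
  | succ m ih =>
    rcases h with h | ⟨c, l', rfl, h⟩
    · exact Or.inl (ih h hk)
    · cases hk with
      | cons _ hk => exact Or.inl (ih h hk)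
      | cons_cons _ hk => exact Or.inr ⟨c, _, rfl, ih h hk⟩

theorem Psi_not {m : ℕ} {l : List (Option V × K)} (h : (some (D.v m), 0) ∉ l) :
    Psi D (m + 1) l = cat (push col (D.w m)) (sg l) := by
  cases l with
  | nil => simp [Psi, cat_nil_right]
  | cons a l =>
    have : a ≠ (some (D.v m), 0) := by rintro rfl; simp at h
    simp [Psi, this]

theorem col_inj : Function.Injective (col : V → Option V × K) := by
  intro a b h; simpa [col] using h

theorem push_cat {V W : Type} (g : V → W) (a e : Ch K V) :
    push g (cat a e) = cat (push g a) (push g e) := by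
  refine hom_ext_apply (F := push g ∘ₗ cat.flip e) (G := cat.flip (push g e) ∘ₗ push g)
    (fun l => ?_) a
  refine hom_ext_apply (F := push g ∘ₗ cat (sg l)) (G := cat (push g (sg l)) ∘ₗ push g)
    (fun m => ?_) e
  simp

theorem w_len {m : ℕ} (hm : m < N) :
    push (R := K) (col (K := K)) (D.w m) ∈ Sp (R := K) {l : List (Option V × K) | l.length = N - m} := by
  refine push_Sp ?_ (D.wS m hm)
  rintro l ⟨h, -⟩
  simpa using h

theorem Psi_bd {m : ℕ} (hm : m ≤ N) {l : List (Option V × K)} (h : Wd D m l) :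
    bd (Psi D m l) = cat (R := K) (push (R := K) col (D.ρ m)) (sg l) +
      (-1 : K) ^ (N + 1 - m) • lin (R := K) (Psi D m) (bd (sg l)) := by
  induction m generalizing l with
  | zero =>
    rw [show l = [] from h]
    simp [Psi, bd_cone, ← push_bd, D.bdρ, cat_nil_right]
  | succ m ih =>
    have hN : N + 1 - (m + 1) = N - m := by omega
    rw [hN]
    by_cases h0 : (some (D.v m), (0 : K)) ∈ l
    · rcases h with h | ⟨c, l', rfl, h⟩
      · exact absurd h0 (Wd_not_mem D (by omega) h _)
      have hn := Wd_not_mem D (by omega) h 0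
      have hc : c = 0 := by
        rcases List.mem_cons.1 h0 with h0 | h0
        · simpa using h0.symm
        · exact absurd h0 hn
      subst hc
      have e1 : Psi D (m + 1) ((some (D.v m), (0 : K)) :: l') = Psi D m l' := by simp [Psi]
      have e2 : lin (Psi D (m + 1)) (cone (some (D.v m), 0) (bd (sg l'))) =
          lin (R := K) (Psi D m) (bd (sg l')) :=
        hom_ext_apply (F := lin (Psi D (m + 1)) ∘ₗ cone (some (D.v m), (0 : K))) (G := lin (Psi D m))
          (by intro k; simp [Psi]) _
      rw [e1, ih (by omega) h, bd_cons, map_sub, e2, lin_sg, Psi_not D hn, D.ρs m (by omega)]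
      have e3 : N + 1 - m = N - m + 1 := by omega
      have e4 : cat (push col (cat (D.ρ (m + 1)) (sg [D.v m]))) (sg l') =
          cat (push col (D.ρ (m + 1))) (sg ((some (D.v m), (0 : K)) :: l')) := by
        rw [push_cat, push_sg, cat_assoc, cat_sg]; rfl
      rw [e3, pow_succ, map_add, map_add, LinearMap.add_apply, e4, map_smul, map_smul, LinearMap.smul_apply,
        smul_sub]
      simp only [mul_neg, mul_one, neg_smul]
      abel
    · have e1 : lin (R := K) (Psi D (m + 1)) (bd (sg l)) = cat (push col (D.w m)) (bd (sg l)) := by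
        refine Sp_eq (R := K) ?_ (bd_sub l)
        rintro k ⟨-, hk⟩
        rw [lin_sg, Psi_not D (fun h => h0 (hk.subset h))]
      rw [Psi_not D h0, e1, bd_cat (w_len D (by omega)), ← push_bd, D.bdw m (by omega)]

theorem Psi_mem (hX : IsLowerSet X) (h0 : ∅ ∈ X) {m : ℕ} (hm : m ≤ N) {l : List (Option V × K)}
    (h : Wd D m l) (hl : l.length = m) : Psi D m l ∈ Sp (R := K) (La (YY X) (N + 1)) := by
  induction m generalizing l with
  | zero =>
    simp only [Psi]
    refine cone_Sp (s := {l : List (Option V × K) | ∃ k ∈ La X N, l = k.map col}) ?_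
      (push_Sp (s := La X N) (t := {l | ∃ k ∈ La X N, l = k.map col}) (fun k hk => ⟨k, hk, rfl⟩) D.ρ0)
    rintro _ ⟨k, ⟨hk, hkX⟩, rfl⟩
    refine ⟨by simp [hk], fun c => hX ?_ hkX, Or.inr ⟨0, ?_⟩⟩
    · intro v hv
      rw [mem_cls] at hv
      simp [col] at hv
      simpa using hv.1
    · intro a ha
      simp [col] at ha
      rcases ha with rfl | ⟨x, -, rfl⟩ <;> rfl
  | succ m ih =>
    rcases h with h | ⟨c, l', rfl, h⟩
    · have := Wd_len D h; omega
    have hl' : l'.length = m := by simpa using hl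
    by_cases hc : c = 0
    · subst hc
      simp only [Psi, if_true]
      exact ih (by omega) h hl'
    have hn := Wd_not_mem D (by omega) h 0
    have hW : Wd D (m + 1) ((some (D.v m), c) :: l') := Or.inr ⟨c, l', rfl, h⟩
    rw [Psi_not D (by
      intro h'
      rcases List.mem_cons.1 h' with h' | h'
      · simp only [Prod.mk.injEq, true_and] at h'; exact hc h'.symm
      · exact hn h')]
    refine cat_Sp (s := {l : List (Option V × K) | ∃ k : List V, (k.length = N - m ∧ (Finset.range m).image D.v ∪ k.toFinset ∈ X ∧
      ∀ i ≤ m, D.v i ∉ k) ∧ l = k.map col}) ?_ (push_Sp (s := {l | l.length = N - m ∧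
      (Finset.range m).image D.v ∪ l.toFinset ∈ X ∧ ∀ i ≤ m, D.v i ∉ l}) (by intro k hk; exact ⟨k, hk, rfl⟩)
      (D.wS m (by omega))) (sg_mem (s := {(some (D.v m), c) :: l'}) rfl)
    rintro _ ⟨k, ⟨hk1, hk2, hk3⟩, rfl⟩ _ rfl
    refine ⟨by simp; omega, fun d => ?_, Or.inl ⟨?_, ?_⟩⟩
    · by_cases hd : d = 0
      · subst hd
        refine hX ?_ hk2
        intro v hv
        rw [mem_cls] at hv
        simp only [List.mem_toFinset, List.mem_append, List.mem_map, List.mem_cons, Prod.mk.injEq] at hv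
        simp only [Finset.mem_union, List.mem_toFinset, Finset.mem_image, Finset.mem_range]
        rcases hv with ⟨x, hx, hxv⟩ | hv | hv
        · right
          simp [col] at hxv
          rwa [← hxv]
        · exact absurd hv.2.symm hc
        · left
          obtain ⟨i, hi, h'⟩ := Wd_idx D h _ hv
          exact ⟨i, hi, by simpa using h'.symm⟩
      · refine hX ?_ D.face
        intro v hv
        rw [mem_cls] at hv
        simp only [List.mem_toFinset, List.mem_append, List.mem_map] at hv
        simp only [Finset.mem_image, Finset.mem_range]
        rcases hv with ⟨x, hx, hxv⟩ | hv
        · simp [col] at hxv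
          exact absurd hxv.2.symm hd
        · obtain ⟨i, hi, h'⟩ := Wd_idx D hW _ hv
          exact ⟨i, by omega, by simpa using h'.symm⟩
    · intro a ha
      simp only [List.mem_toFinset, List.mem_append, List.mem_map] at ha
      rcases ha with ⟨x, hx, rfl⟩ | ha
      · simp [col]
      · obtain ⟨i, hi, h'⟩ := Wd_idx D hW _ ha
        simp [h']
    · have key : ∀ (v : V) (d e : K), (some v, d) ∈ k.map (col (K := K)) →
          (some v, e) ∉ (some (D.v m), c) :: l' := by
        intro v d e h1 h2
        obtain ⟨i, hi, h'⟩ := Wd_idx D hW _ h2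
        simp only [List.mem_map, col, Prod.mk.injEq, Option.some.injEq] at h1 h'
        obtain ⟨x, hx, rfl, -⟩ := h1
        exact hk3 i (by omega) (h' ▸ hx)
      intro v d e h1 h2
      simp only [List.mem_toFinset, List.mem_append] at h1 h2
      rcases h1 with h1 | h1 <;> rcases h2 with h2 | h2
      · simp only [List.mem_map, col, Prod.mk.injEq] at h1 h2
        obtain ⟨x, -, -, rfl⟩ := h1
        obtain ⟨x, -, -, rfl⟩ := h2
        rfl
      · exact absurd h2 (key _ _ _ h1)
      · exact absurd h1 (key _ _ _ h2)
      · exact Wd_fun D hm hW _ _ _ h1 h2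

/-- exponents of the zigzag -/
def nn (p i : ℕ) : ℕ := if i % 2 = 1 then 1 else p - 1

theorem nn_add {p : ℕ} (hp : 2 ≤ p) (i : ℕ) : nn p (i + 1) + nn p i = p := by
  unfold nn
  rcases Nat.mod_two_eq_zero_or_one i with h | h
  · rw [if_pos (by omega), if_neg (by omega)]; omega
  · rw [if_neg (by omega), if_pos (by omega)]; omega

theorem exists_zigzag (p : ℕ) [Fact p.Prime] [CharP K p] {ι : Type} [Fintype ι] (b : ι → K)
    (hX : IsLowerSet X) (h0 : ∅ ∈ X) (hN : 0 < N) (D : FlagData K X N) :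
    ∃ c : ℕ → Ch K (Option V × K), (∀ i ≤ N, c i ∈ Sp (R := K) (La (YY X) (i + 1))) ∧
      bd (c 0) = sg [] ∧ ∀ i < N, bd (c (i + 1)) = (Xo b ^ nn p (i + 1)) (c i) := by
  have hp := (Fact.out : p.Prime).two_le
  let e : ℕ → Ch K (Option V × K) := fun i => Nat.rec (sg [(some (D.v 0), 0)])
    (fun i c => cone (some (D.v (i + 1)), 0) ((Xo b ^ nn p (i + 1)) c)) i
  have e0 : e 0 = sg [(some (D.v 0), 0)] := rfl
  have es : ∀ i, e (i + 1) = cone (some (D.v (i + 1)), 0) ((Xo b ^ nn p (i + 1)) (e i)) := fun i => rfl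
  let S : ℕ → Set (List (Option V × K)) := fun i => {l | Wd D i l ∧ l.length = i}
  have hS : ∀ i g, ∀ l ∈ S i, l.map (tr g) ∈ S i := by
    rintro i g l ⟨h1, h2⟩
    exact ⟨Wd_tr D h1 g, by simpa using h2⟩
  have heS : ∀ i, e i ∈ Sp (R := K) (S (i + 1)) := by
    intro i
    induction i with
    | zero => exact sg_mem ⟨Or.inr ⟨0, [], rfl, rfl⟩, rfl⟩
    | succ i ih =>
      rw [es]
      refine cone_Sp ?_ (Xo_pow_Sp b (hS _) _ ih)
      rintro l ⟨h1, h2⟩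
      exact ⟨Or.inr ⟨0, l, rfl, h1⟩, by simp [h2]⟩
  have hb0 : bd (e 0) = sg [] := by rw [e0, bd_cons]; simp
  have hpp : ∀ i c, (Xo b ^ nn p (i + 1)) ((Xo b ^ nn p i) c) = (0 : Ch K (Option V × K)) := by
    intro i c
    rw [← Module.End.mul_apply, ← pow_add, nn_add hp, Xo_pow_p]
    rfl
  have hz : ∀ i, bd ((Xo b ^ nn p (i + 1)) (e i)) = 0 ∧
      bd (e (i + 1)) = (Xo b ^ nn p (i + 1)) (e i) := by
    intro i
    induction i with
    | zero =>
      have : bd ((Xo b ^ nn p (0 + 1)) (e 0)) = 0 := by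
        rw [← Xo_pow_bd, hb0]
        simp [nn, Xo_nil]
      refine ⟨this, ?_⟩
      rw [es, bd_cone, this]; simp
    | succ i ih =>
      have : bd ((Xo b ^ nn p (i + 1 + 1)) (e (i + 1))) = 0 := by
        rw [← Xo_pow_bd, ih.2, hpp]
      refine ⟨this, ?_⟩
      rw [es, bd_cone, this]; simp
  have hSY : ∀ i ≤ N, S i ⊆ La (YY X) i := by
    rintro i hi l ⟨h1, h2⟩
    refine ⟨h2, fun c => hX ?_ D.face, Or.inl ⟨?_, ?_⟩⟩
    · intro v hv
      rw [mem_cls, List.mem_toFinset] at hv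
      obtain ⟨j, hj, h'⟩ := Wd_idx D h1 _ hv
      simp only [Finset.mem_image, Finset.mem_range]
      exact ⟨j, by omega, by simpa using h'.symm⟩
    · intro a ha
      obtain ⟨j, hj, h'⟩ := Wd_idx D h1 a (by simpa using ha)
      simp [h']
    · intro v c c' h h'
      exact Wd_fun D hi h1 _ _ _ (by simpa using h) (by simpa using h')
  refine ⟨fun i => if i < N then e i else lin (Psi D N) ((Xo b ^ nn p N) (e (N - 1))), ?_, ?_, ?_⟩
  · intro i hi
    dsimp only
    split_ifs with h
    · exact Sp_mono (hSY _ h) (heS i)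
    · have : i = N := by omega
      subst this
      refine Sp_map ?_ (Xo_pow_Sp b (hS _) _ (heS (i - 1)))
      rintro l ⟨h1, h2⟩
      rw [lin_sg]
      have : i - 1 + 1 = i := by omega
      rw [this] at h1 h2
      exact Psi_mem D hX h0 le_rfl h1 h2
  · simp [hN, hb0]
  · intro i hi
    dsimp only
    rw [if_pos hi]
    split_ifs with h
    · exact (hz i).2
    · obtain rfl : N = i + 1 := by omega
      have h1 := Xo_pow_Sp b (hS _) (nn p (i + 1)) (heS i)
      have h2 := Sp_eq (F := bd ∘ₗ lin (Psi D (i + 1)))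
        (G := LinearMap.id + (-1 : K) ^ (i + 1 + 1 - (i + 1)) • lin (Psi D (i + 1)) ∘ₗ bd) ?_ h1
      · have h3 := (hz i).1
        simp only [LinearMap.comp_apply, LinearMap.add_apply, LinearMap.smul_apply, h3] at h2
        simpa using h2
      · rintro l ⟨h3, -⟩
        simp only [LinearMap.comp_apply, LinearMap.add_apply, LinearMap.smul_apply, lin_sg]
        rw [Psi_bd D le_rfl h3, D.ρN]
        simp

end F7b
end Tv

end

noncomputable section
namespace Tv
open Finsupp

section F9a
variable {K M : Type} [Field K] [AddCommGroup M] [Module K M] (p : ℕ) [Fact p.Prime] [CharP K p]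
  {X y : Module.End K M} {D S : Submodule K M}

theorem pow_inv (hX : ∀ v ∈ D, X v ∈ D) (n : ℕ) {v : M} (hv : v ∈ D) : (X ^ n) v ∈ D := by
  induction n with
  | zero => simpa
  | succ n ih => rw [pow_succ', Module.End.mul_apply]; exact hX _ ih

theorem weyl_one (hXD : ∀ v ∈ D, X v ∈ D) (hyD : ∀ v ∈ D, y v ∈ D)
    (hyS : ∀ v ∈ S, y v ∈ S) (hxy : ∀ v ∈ S, X (y v) - y (X v) = - v) {v : M} (hv : v ∈ S)
    (h : X v ∈ D) : ∃ u ∈ S, v - (X ^ (p - 1)) u ∈ D := by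
  have hyk : ∀ k, (y ^ k) v ∈ S := fun k => pow_inv hyS k hv
  have h1 : ∀ k : ℕ, X ((y ^ (k + 1)) v) + ((k : K) + 1) • (y ^ k) v ∈ D := by
    intro k
    induction k with
    | zero =>
      have := hxy v hv
      have e : X ((y ^ (0 + 1)) v) + (((0 : ℕ) : K) + 1) • (y ^ 0) v = y (X v) := by
        simp
        rw [← sub_eq_zero]
        rw [eq_neg_iff_add_eq_zero] at this
        rw [← this]; abel
      rw [e]; exact hyD _ h
    | succ k ih =>
      have := hxy _ (hyk (k + 1))
      have e : X ((y ^ (k + 1 + 1)) v) + (((k + 1 : ℕ) : K) + 1) • (y ^ (k + 1)) v =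
          y (X ((y ^ (k + 1)) v) + ((k : K) + 1) • (y ^ k) v) := by
        rw [pow_succ' y (k + 1), Module.End.mul_apply, eq_add_of_sub_eq this]
        rw [map_add, map_smul, pow_succ' y k, Module.End.mul_apply]
        push_cast
        module
      rw [e]; exact hyD _ ih
  have h2 : ∀ k : ℕ, (X ^ k) ((y ^ k) v) - ((-1 : K) ^ k * (k.factorial : K)) • v ∈ D := by
    intro k
    induction k with
    | zero => simp
    | succ k ih =>
      have e : (X ^ (k + 1)) ((y ^ (k + 1)) v) - ((-1 : K) ^ (k + 1) * ((k + 1).factorial : K)) • v =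
          (X ^ k) (X ((y ^ (k + 1)) v) + ((k : K) + 1) • (y ^ k) v) -
          ((k : K) + 1) • ((X ^ k) ((y ^ k) v) - ((-1 : K) ^ k * (k.factorial : K)) • v) := by
        rw [map_add, map_smul, pow_succ X k, Module.End.mul_apply, Nat.factorial_succ]
        push_cast
        rw [pow_succ]
        module
      rw [e]
      exact sub_mem (pow_inv hXD k (h1 k)) (D.smul_mem _ ih)
  have hp := (Fact.out : p.Prime)
  have hc : ((-1 : K) ^ (p - 1) * ((p - 1).factorial : K)) ≠ 0 := by
    refine mul_ne_zero (pow_ne_zero _ (by simp)) ?_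
    rw [Ne, CharP.cast_eq_zero_iff K p, hp.dvd_factorial]
    have := hp.two_le
    omega
  refine ⟨((-1 : K) ^ (p - 1) * ((p - 1).factorial : K))⁻¹ • (y ^ (p - 1)) v, S.smul_mem _ (hyk _), ?_⟩
  have := D.smul_mem (-((-1 : K) ^ (p - 1) * ((p - 1).factorial : K))⁻¹) (h2 (p - 1))
  convert this using 1
  rw [map_smul, smul_sub, smul_smul, neg_mul, inv_mul_cancel₀ hc]
  module

theorem weyl_comm (hXS : ∀ v ∈ S, X v ∈ S)
    (hxy : ∀ v ∈ S, X (y v) - y (X v) = - v) (k : ℕ) {v : M} (hv : v ∈ S) :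
    (X ^ (k + 1)) (y v) = y ((X ^ (k + 1)) v) - ((k : K) + 1) • (X ^ k) v := by
  induction k with
  | zero =>
    have := hxy v hv
    simp [eq_add_of_sub_eq this]; abel
  | succ k ih =>
    rw [pow_succ' X (k + 1), Module.End.mul_apply, ih, map_sub, map_smul,
      eq_add_of_sub_eq (hxy _ (pow_inv hXS (k + 1) hv)), Module.End.mul_apply, pow_succ' X k,
      Module.End.mul_apply]
    push_cast
    module

theorem weyl_two (hXS : ∀ v ∈ S, X v ∈ S) (hyD : ∀ v ∈ D, y v ∈ D)
    (hyS : ∀ v ∈ S, y v ∈ S) (hxy : ∀ v ∈ S, X (y v) - y (X v) = - v) (k : ℕ) (hk : k < p) {v : M}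
    (hv : v ∈ S) (h : (X ^ k) v ∈ D) : ∃ u ∈ S, v - X u ∈ D := by
  induction k generalizing v with
  | zero => exact ⟨0, zero_mem _, by simpa using h⟩
  | succ k ih =>
    have hc : ((k : K) + 1) ≠ 0 := by
      intro h0
      have h0' : ((k + 1 : ℕ) : K) = 0 := by push_cast; exact h0
      rw [CharP.cast_eq_zero_iff K p] at h0'
      exact absurd (Nat.le_of_dvd (by omega) h0') (by omega)
    have hv' : v + ((k : K) + 1)⁻¹ • X (y v) ∈ S := add_mem hv (S.smul_mem _ (hXS _ (hyS _ hv)))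
    obtain ⟨u, hu, hu'⟩ := ih (by omega) hv' (by
      have e : (X ^ k) (v + ((k : K) + 1)⁻¹ • X (y v)) = ((k : K) + 1)⁻¹ • y ((X ^ (k + 1)) v) := by
        rw [map_add, map_smul, ← Module.End.mul_apply (X ^ k) X, ← pow_succ, weyl_comm hXS hxy k hv,
          smul_sub, smul_smul, inv_mul_cancel₀ hc]
        module
      rw [e]; exact D.smul_mem _ (hyD _ h))
    refine ⟨u - ((k : K) + 1)⁻¹ • y v, sub_mem hu (S.smul_mem _ (hyS _ hv)), ?_⟩
    convert hu' using 1
    rw [map_sub, map_smul]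
    abel

theorem weyl_nn (hXD : ∀ v ∈ D, X v ∈ D) (hXS : ∀ v ∈ S, X v ∈ S) (hyD : ∀ v ∈ D, y v ∈ D)
    (hyS : ∀ v ∈ S, y v ∈ S) (hxy : ∀ v ∈ S, X (y v) - y (X v) = - v) (i : ℕ) {v : M}
    (hv : v ∈ S) (h : (X ^ nn p (i + 1)) v ∈ D) : ∃ u ∈ S, v - (X ^ nn p i) u ∈ D := by
  have hp := (Fact.out : p.Prime).two_le
  unfold nn at *
  rcases Nat.mod_two_eq_zero_or_one i with h1 | h1
  · rw [if_pos (by omega)] at h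
    rw [if_neg (by omega)]
    exact weyl_one p hXD hyD hyS hxy hv (by simpa using h)
  · rw [if_neg (by omega)] at h
    rw [if_pos (by omega)]
    obtain ⟨u, hu, hu'⟩ := weyl_two p hXS hyD hyS hxy (p - 1) (by omega) hv h
    exact ⟨u, hu, by simpa using hu'⟩

theorem comm_sum_sub {K ι B : Type} [Fintype ι] [Field K] [Ring B] [Algebra K B] (b : ι → K)
    (t : ι → B) (Z : B) (h : ∀ i, Commute (t i) Z) : Commute (∑ i, b i • (t i - 1)) Z := by
  refine Commute.sum_left _ _ _ fun i _ => Commute.smul_left ?_ _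
  exact Commute.sub_left (h _) (Commute.one_left Z)

theorem ring_comm {B : Type} [Ring B] {X F M U : B} (h1 : X * M = M * X) (h2 : X * U = U * X)
    (h3 : U * M = M * U) (h4 : X * F - F * X = - U) (n : ℕ) :
    X * (F * M * U ^ n) - (F * M * U ^ n) * X = - (M * U ^ (n + 1)) := by
  have h5 : U ^ n * X = X * U ^ n := ((show Commute X U from h2).pow_right n).symm
  have h6 : X * F = F * X - U := by
    have := eq_add_of_sub_eq h4
    rw [this]; abel
  calc X * (F * M * U ^ n) - (F * M * U ^ n) * X
      = (X * F) * M * U ^ n - F * M * (U ^ n * X) := by noncomm_ring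
    _ = (F * X - U) * M * U ^ n - F * M * (X * U ^ n) := by rw [h5, h6]
    _ = F * (X * M) * U ^ n - F * (M * X) * U ^ n - (U * M) * U ^ n := by noncomm_ring
    _ = - (M * U ^ (n + 1)) := by rw [h1, h3, pow_succ']; noncomm_ring

end F9a

section F9b
variable {K W : Type} [Field K]

def QQ : Set (Ch K W) := {q | (∃ a, q = sg [a, a]) ∨ ∃ a b, q = sg [a, b] + sg [b, a]}

def DD : Submodule K (Ch K W) :=
  Submodule.span K {x | ∃ l m : List W, ∃ q ∈ QQ (K := K), x = cat (sg l) (cat q (sg m))}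

theorem DD_cat {q : Ch K W} (hq : q ∈ QQ) (x z : Ch K W) : cat x (cat q z) ∈ DD (K := K) := by
  refine Sp_map (F := cat.flip (cat q z)) (s := Set.univ) ?_ (Sp_univ x)
  intro l _
  refine Sp_map (F := cat (sg l) ∘ₗ cat q) (s := Set.univ) ?_ (Sp_univ z)
  intro m _
  exact Submodule.subset_span ⟨l, m, q, hq, rfl⟩

theorem DD_map {F : Module.End K (Ch K W)} (h : ∀ l m : List W, ∀ q ∈ QQ (K := K),
    F (cat (sg l) (cat q (sg m))) ∈ DD (K := K)) : ∀ v ∈ DD (K := K) (W := W), F v ∈ DD (K := K) := by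
  have : DD (K := K) (W := W) ≤ DD.comap F := by
    apply Submodule.span_le.2
    rintro _ ⟨l, m, q, hq, rfl⟩
    exact h l m q hq
  exact fun v hv => this hv

theorem DD_cone (a : W) : ∀ v ∈ DD (K := K) (W := W), cone a v ∈ DD (K := K) := by
  refine DD_map ?_
  intro l m q hq
  unfold cone
  rw [← cat_assoc]
  exact DD_cat hq _ _

theorem QQ_bd {q : Ch K W} (hq : q ∈ QQ) : bd q = 0 ∧ q ∈ Sp (R := K) {l : List W | l.length = 2} := by
  rcases hq with ⟨a, rfl⟩ | ⟨a, b, rfl⟩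
  · refine ⟨by simp [bd_cons], sg_mem rfl⟩
  · refine ⟨by simp [bd_cons], add_mem (sg_mem rfl) (sg_mem rfl)⟩

theorem DD_bd : ∀ v ∈ DD (K := K) (W := W), bd v ∈ DD (K := K) := by
  refine DD_map ?_
  intro l m q hq
  obtain ⟨h1, h2⟩ := QQ_bd hq
  rw [bd_cat_sg, bd_cat h2, h1]
  refine add_mem (DD_cat hq _ _) (Submodule.smul_mem _ _ ?_)
  simp only [map_zero, LinearMap.zero_apply, zero_add, map_smul]
  exact Submodule.smul_mem _ _ (DD_cat hq _ _)

theorem DD_dup1 (a : W) (l m : List W) : (sg (a :: (l ++ a :: m)) : Ch K W) ∈ DD (K := K) := by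
  induction l with
  | nil =>
    have := DD_cat (K := K) (q := sg [a, a]) (Or.inl ⟨a, rfl⟩) (sg []) (sg m)
    simpa using this
  | cons b l ih =>
    have h1 := DD_cat (K := K) (q := sg [a, b] + sg [b, a]) (Or.inr ⟨a, b, rfl⟩) (sg [])
      (sg (l ++ a :: m))
    have h2 := DD_cone b _ ih
    have := sub_mem h1 h2
    simpa using this

theorem DD_dup {l : List W} (h : ¬ l.Nodup) : (sg l : Ch K W) ∈ DD (K := K) := by
  induction l with
  | nil => simp at h
  | cons a l ih =>
    by_cases ha : a ∈ l
    · obtain ⟨s, t, rfl⟩ := List.append_of_mem ha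
      exact DD_dup1 a s t
    · have : ¬ l.Nodup := fun h' => h (List.nodup_cons.2 ⟨ha, h'⟩)
      have := DD_cone a _ (ih this)
      simpa using this

theorem DD_nil : ∀ v ∈ DD (K := K) (W := W), v [] = 0 := by
  have : DD (K := K) (W := W) ≤ LinearMap.ker (Finsupp.lapply (R := K) ([] : List W)) := by
    apply Submodule.span_le.2
    rintro _ ⟨l, m, q, hq, rfl⟩
    rcases hq with ⟨a, rfl⟩ | ⟨a, b, rfl⟩ <;>
      simp only [SetLike.mem_coe, LinearMap.mem_ker, map_add, LinearMap.add_apply, cat_sg, Finsupp.lapply_apply] <;>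
      simp [sg]
  intro v hv
  exact this hv

/-- diagonal operators -/
def Dg (θ : List W → K) : Module.End K (Ch K W) := lin (fun l => θ l • sg l)

theorem Dg_sg (θ : List W → K) (l : List W) : Dg θ (sg l) = θ l • sg l := by simp [Dg]

theorem Dg_mul (θ θ' : List W → K) : Dg θ * Dg θ' = Dg (fun l => θ l * θ' l) := by
  refine hom_ext fun l => ?_
  simp [Module.End.mul_apply, Dg_sg, smul_smul, mul_comm]

theorem Dg_pow (θ : List W → K) (n : ℕ) : Dg θ ^ n = Dg (fun l => θ l ^ n) := by
  induction n with
  | zero => refine hom_ext fun l => ?_; simp [Dg_sg]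
  | succ n ih => rw [pow_succ, ih, Dg_mul]; simp [pow_succ]

theorem Dg_DD {θ : List W → K} (h : ∀ l m : List W, (∀ x, x ∈ l ↔ x ∈ m) → θ l = θ m) :
    ∀ v ∈ DD (K := K) (W := W), Dg θ v ∈ DD (K := K) := by
  refine DD_map ?_
  intro l m q hq
  rcases id hq with ⟨a, rfl⟩ | ⟨a, b, rfl⟩
  · have := DD_cat hq (sg l) (sg m)
    simp only [cat_sg] at this ⊢
    rw [Dg_sg]
    exact Submodule.smul_mem _ _ this
  · have := DD_cat hq (sg l) (sg m)
    simp only [map_add, LinearMap.add_apply, cat_sg] at this ⊢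
    rw [Dg_sg, Dg_sg, h (l ++ ([b, a] ++ m)) (l ++ ([a, b] ++ m)), ← smul_add]
    · exact Submodule.smul_mem _ _ this
    · intro x; simp; tauto

theorem Dg_Sp (θ : List W → K) {s : Set (List W)} : ∀ v ∈ Sp (R := K) s, Dg θ v ∈ Sp (R := K) s := by
  intro v hv
  refine Sp_map ?_ hv
  intro l hl
  rw [Dg_sg]
  exact Submodule.smul_mem _ _ (sg_mem hl)

theorem T_DD {A : Type} (g : K) : ∀ v ∈ DD (K := K) (W := A × K), T g v ∈ DD (K := K) := by
  refine DD_map ?_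
  intro l m q hq
  unfold T
  classical
  rw [push_cat, push_cat]
  apply DD_cat
  rcases hq with ⟨a, rfl⟩ | ⟨a, b, rfl⟩
  · exact Or.inl ⟨tr g a, by simp⟩
  · exact Or.inr ⟨tr g a, tr g b, by simp⟩

theorem T_Dg {A : Type} (g : K) {θ : List (A × K) → K} (h : ∀ l, θ (l.map (tr g)) = θ l) :
    Commute (T g) (Dg θ) := by
  refine hom_ext fun l => ?_
  simp [Module.End.mul_apply, Dg_sg, T_sg, h]

end F9b

section F9c
variable {K J : Type} [Field K] [Fintype K] [DecidableEq K] [Fintype J] [DecidableEq J]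
  (p : ℕ) [Fact p.Prime] [CharP K p] [Algebra (ZMod p) K]

/-- stabiliser of a finite set of coloured vertices -/
def stab (s : Finset (J × K)) : AddSubgroup K where
  carrier := {g | s.image (tr g) = s}
  zero_mem' := by simp [tr_zero]
  add_mem' := by
    intro a b ha hb
    simp only [Set.mem_ofPred_eq] at *
    rw [← tr_tr, ← Finset.image_image, hb, ha]
  neg_mem' := by
    intro a ha
    simp only [Set.mem_ofPred_eq] at *
    conv_lhs => rw [← ha]
    rw [Finset.image_image, tr_tr]
    simp [tr_zero]

theorem mem_stab {s : Finset (J × K)} {g : K} : g ∈ stab s ↔ s.image (tr g) = s := Iff.rfl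

theorem image_tr_tr (g h : K) (s : Finset (J × K)) : (s.image (tr h)).image (tr g) = s.image (tr (g + h)) := by
  rw [Finset.image_image, tr_tr]

theorem image_tr_inj (g : K) {s t : Finset (J × K)} (h : s.image (tr g) = t.image (tr g)) : s = t :=
  Finset.image_injective (tr_inj g) h

theorem stab_tr (g : K) (s : Finset (J × K)) : stab (s.image (tr g)) = stab s := by
  ext h
  rw [mem_stab, mem_stab, image_tr_tr, add_comm, ← image_tr_tr]
  exact ⟨fun h' => image_tr_inj g h', fun h' => by rw [h']⟩

theorem exists_ell (H : AddSubgroup K) : ∃ ℓ : K →ₗ[ZMod p] ZMod p, (∀ g ∈ H, ℓ g = 0) ∧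
    (H ≠ ⊤ → ℓ ≠ 0) := by
  by_cases h : H = ⊤
  · exact ⟨0, by simp, fun h' => absurd h h'⟩
  · let H' := AddSubgroup.toZModSubmodule p H
    have hlt : H' < ⊤ := by
      rw [lt_top_iff_ne_top]
      intro h'
      apply h
      rw [eq_top_iff]
      intro x _
      have : x ∈ H' := by rw [h']; trivial
      exact this
    obtain ⟨f, hf, hf'⟩ := Submodule.exists_le_ker_of_lt_top H' hlt
    exact ⟨f, fun g hg => hf' hg, fun _ => hf⟩

theorem exists_phi : ∃ (φ : Finset (J × K) → ZMod p) (ℓ : Finset (J × K) → (K →ₗ[ZMod p] ZMod p)),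
    (∀ g s, ℓ (s.image (tr g)) = ℓ s) ∧ (∀ g s, φ (s.image (tr g)) = φ s + ℓ s g) ∧
    ∀ s, stab s ≠ ⊤ → ℓ s ≠ 0 := by
  choose L hL1 hL2 using exists_ell (K := K) p
  let st : Setoid (Finset (J × K)) :=
    { r := fun s t => ∃ g : K, t = s.image (tr g)
      iseqv := by
        refine ⟨fun s => ⟨0, by simp [tr_zero]⟩, ?_, ?_⟩
        · rintro s _ ⟨g, rfl⟩
          exact ⟨-g, by rw [image_tr_tr]; simp [tr_zero]⟩
        · rintro s _ _ ⟨g, rfl⟩ ⟨h, rfl⟩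
          exact ⟨h + g, by rw [image_tr_tr]⟩ }
  let rep : Finset (J × K) → Finset (J × K) := fun s => (Quotient.mk st s).out
  have hrep : ∀ s, ∃ g : K, s = (rep s).image (tr g) := fun s => Quotient.mk_out (s := st) s
  choose γ hγ using hrep
  have hinv : ∀ g s, rep (s.image (tr g)) = rep s := by
    intro g s
    have : (Quotient.mk st (s.image (tr g))) = Quotient.mk st s :=
      Quotient.sound (s := st) (st.symm ⟨g, rfl⟩)
    simp only [rep, this]
  have hst : ∀ s, stab (rep s) = stab s := by
    intro s
    conv_rhs => rw [hγ s]
    rw [stab_tr]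
  refine ⟨fun s => L (stab s) (γ s), fun s => L (stab s), ?_, ?_, ?_⟩
  · intro g s
    simp only [stab_tr]
  · intro g s
    simp only [stab_tr]
    rw [← map_add, ← sub_eq_zero, ← map_sub]
    apply hL1
    rw [← hst, mem_stab]
    have h1 := hγ (s.image (tr g))
    rw [hinv] at h1
    conv_lhs at h1 => rw [hγ s, image_tr_tr]
    apply image_tr_inj (γ s + g)
    rw [image_tr_tr]
    have e : γ s + g + (γ (s.image (tr g)) - (γ s + g)) = γ (s.image (tr g)) := by ring
    rw [e, ← h1, add_comm]
  · intro s hs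
    exact hL2 _ hs

/-- lists in which every row misses a colour -/
def GLs (n : ℕ) : Set (List (J × K)) := {l | l.length = n ∧ ∀ j, ∃ c, (j, c) ∉ l}

theorem GLs_tr {n : ℕ} (g : K) : ∀ l ∈ GLs (J := J) (K := K) n, l.map (tr g) ∈ GLs (J := J) (K := K) n := by
  rintro l ⟨h1, h2⟩
  refine ⟨by simpa using h1, fun j => ?_⟩
  obtain ⟨c, hc⟩ := h2 j
  exact ⟨c + g, by rw [mem_map_tr]; simpa using hc⟩

theorem GLs_stab {n : ℕ} {l : List (J × K)} (h : l ∈ GLs (n + 1)) : stab l.toFinset ≠ ⊤ := by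
  obtain ⟨h1, h2⟩ := h
  obtain ⟨⟨j, c⟩, hjc⟩ := List.exists_mem_of_ne_nil l (by rintro rfl; simp at h1)
  obtain ⟨c', hc'⟩ := h2 j
  intro h
  have h3 : c' - c ∈ stab l.toFinset := by rw [h]; trivial
  rw [mem_stab] at h3
  have h4 : (j, c') ∈ l.toFinset.image (tr (c' - c)) :=
    Finset.mem_image.2 ⟨(j, c), by simpa using hjc, by simp [tr]⟩
  rw [h3] at h4
  exact hc' (by simpa using h4)

theorem toFinset_tr (g : K) (l : List (J × K)) : (l.map (tr g)).toFinset = l.toFinset.image (tr g) := by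
  ext x; simp

theorem exists_y_op {ι : Type} [Fintype ι] (b : Module.Basis ι (ZMod p) K) :
    ∃ y : Module.End K (Ch K (J × K)), (∀ v ∈ DD (K := K), y v ∈ DD (K := K)) ∧
      (∀ n, ∀ v ∈ Sp (R := K) (GLs (J := J) (K := K) n), y v ∈ Sp (R := K) (GLs (J := J) (K := K) n)) ∧
      ∀ n, ∀ v ∈ Sp (R := K) (GLs (J := J) (K := K) (n + 1)), Xo b (y v) - y (Xo b v) = - v := by
  have hnt : Nontrivial (Ch K (J × K)) := inferInstance
  obtain ⟨φ, ℓ, hℓ, hφ, hne⟩ := exists_phi (K := K) (J := J) p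
  let th : ι → List (J × K) → K := fun i l => algebraMap (ZMod p) K (ℓ l.toFinset (b i))
  let lam : List (J × K) → K := fun l => ∑ i, b i * th i l
  have hth : ∀ i g l, th i (l.map (tr g)) = th i l := by
    intro i g l; simp only [th, toFinset_tr, hℓ]
  have hlam : ∀ g l, lam (l.map (tr g)) = lam l := by
    intro g l; simp only [lam, hth]
  let F := Dg (fun l : List (J × K) => algebraMap (ZMod p) K (φ l.toFinset))
  let Mu := Dg (fun l : List (J × K) => (lam l ^ p)⁻¹)
  let U : Module.End K (Ch K (J × K)) := ∑ i, b i • (T (b i) * Dg (th i))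
  have cTM : ∀ g, Commute (T g) Mu := fun g => T_Dg g (by intro l; simp only [hlam])
  have cTt : ∀ g i, Commute (T g) (Dg (th i)) := fun g i => T_Dg g (hth i g)
  have cDD : ∀ θ θ' : List (J × K) → K, Commute (Dg θ) (Dg θ') := by
    intro θ θ'
    unfold Commute SemiconjBy
    rw [Dg_mul, Dg_mul]; simp only [mul_comm]
  have cXU' : ∀ (Z : Module.End K (Ch K (J × K))), (∀ g, Commute (T g) Z) → Commute (Xo b) Z := by
    intro Z hZ
    unfold Xo
    exact comm_sum_sub (B := Module.End K (Ch K (J × K))) b (fun i => T (b i)) Z (fun i => hZ _)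
  have cTU : ∀ g, Commute (T g) U := by
    intro g
    refine Commute.sum_right _ _ _ fun i _ => Commute.smul_right ?_ _
    exact (T_comm _ _).mul_right (cTt _ _)
  have cUM : Commute U Mu := by
    refine Commute.sum_left _ _ _ fun i _ => Commute.smul_left ?_ _
    exact (cTM _).mul_left (cDD _ _)
  have hUp : U ^ p = Dg (fun l => lam l ^ p) := by
    have h1 : U ^ p = ∑ i, (b i • (T (b i) * Dg (th i))) ^ p := by
      refine sum_pow_char_comm p Finset.univ (fun i => b i • (T (b i) * Dg (th i))) ?_
      intro i j
      refine Commute.smul_left (Commute.smul_right ?_ _) _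
      exact ((T_comm _ _).mul_right (cTt _ _)).mul_left (((cTt _ _).symm).mul_right (cDD _ _))
    rw [h1]
    refine hom_ext fun l => ?_
    rw [LinearMap.sum_apply, Dg_sg]
    have h2 : ∀ i, ((b i • (T (b i) * Dg (th i))) ^ p : Module.End K (Ch K (J × K))) (sg l) =
        (b i * th i l) ^ p • sg l := by
      intro i
      rw [smul_pow, (cTt _ _).mul_pow, T_pow, Dg_pow]
      simp [T_zero, Dg_sg, smul_smul, mul_pow]
    simp only [h2]
    rw [← Finset.sum_smul, ← sum_pow_char]
  have hXF : Xo b * F - F * Xo b = - U := by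
    refine hom_ext fun l => ?_
    simp only [LinearMap.sub_apply, LinearMap.neg_apply, Module.End.mul_apply, F, U, Dg_sg, map_smul,
      Xo_apply, LinearMap.sum_apply, LinearMap.smul_apply, map_sum, map_sub, T_sg, toFinset_tr, hφ, map_add,
      Finset.smul_sum, ← Finset.sum_sub_distrib, ← Finset.sum_neg_distrib]
    refine Finset.sum_congr rfl fun i _ => ?_
    simp only [th]
    module
  have hcomm := ring_comm (B := Module.End K (Ch K (J × K))) (X := Xo b) (F := F) (M := Mu) (U := U) (cXU' Mu cTM).eq (cXU' U cTU).eq cUM.eq hXF (p - 1)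
  have hp := (Fact.out : p.Prime)
  rw [Nat.sub_add_cancel hp.one_le, hUp, Dg_mul (fun l => (lam l ^ p)⁻¹)] at hcomm
  have hset : ∀ l m : List (J × K), (∀ x, x ∈ l ↔ x ∈ m) → l.toFinset = m.toFinset := by
    intro l m h; ext x; simp [h]
  have DF := Dg_DD (K := K) (θ := fun l : List (J × K) => algebraMap (ZMod p) K (φ l.toFinset))
    (by intro l m h; simp only [hset l m h])
  have DM := Dg_DD (K := K) (θ := fun l : List (J × K) => (lam l ^ p)⁻¹)
    (by intro l m h; simp only [lam, th, hset l m h])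
  have DU : ∀ v ∈ DD (K := K), U v ∈ DD (K := K) := by
    intro v hv
    simp only [U, LinearMap.sum_apply, LinearMap.smul_apply, Module.End.mul_apply]
    refine sum_mem fun i _ => Submodule.smul_mem _ _ (T_DD _ _ (Dg_DD ?_ v hv))
    intro l m h; simp only [th, hset l m h]
  have SU : ∀ n, ∀ v ∈ Sp (R := K) (GLs (J := J) (K := K) n), U v ∈ Sp (R := K) (GLs (J := J) (K := K) n) := by
    intro n v hv
    simp only [U, LinearMap.sum_apply, LinearMap.smul_apply, Module.End.mul_apply]
    exact sum_mem fun i _ => Submodule.smul_mem _ _ (push_Sp (GLs_tr _) (Dg_Sp _ v hv))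
  refine ⟨F * Mu * U ^ (p - 1), ?_, ?_, ?_⟩
  · intro v hv
    exact DF _ (DM _ (pow_inv DU _ hv))
  · intro n v hv
    exact Dg_Sp _ _ (Dg_Sp _ _ (pow_inv (SU n) _ hv))
  · intro n v hv
    have h1 := DFunLike.congr_fun hcomm v
    refine h1.trans ?_
    rw [LinearMap.neg_apply]
    congr 1
    refine Sp_eq (G := LinearMap.id) ?_ hv
    intro l hl
    rw [Dg_sg]
    have hl0 : lam l ≠ 0 := by
      intro h0
      apply hne _ (GLs_stab hl)
      have h2 : ∑ i, ℓ l.toFinset (b i) • b i = 0 := by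
        rw [← h0]
        refine Finset.sum_congr rfl fun i _ => ?_
        rw [Algebra.smul_def, mul_comm]
      have h3 := Fintype.linearIndependent_iff.1 b.linearIndependent _ h2
      exact b.ext (by intro i; simp [h3])
    rw [inv_mul_cancel₀ (pow_ne_zero _ hl0)]
    simp

theorem GLs_DD {n : ℕ} (hn : Fintype.card J * (Fintype.card K - 1) < n) :
    Sp (R := K) (GLs (J := J) (K := K) n) ≤ DD (K := K) := by
  refine Submodule.span_le.2 ?_
  rintro _ ⟨l, ⟨h1, h2⟩, rfl⟩
  apply DD_dup
  intro hnd
  choose c hc using h2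
  have h3 : l.toFinset ⊆ Finset.univ.biUnion (fun j : J => (Finset.univ.erase (c j)).image (fun k => (j, k))) := by
    rintro ⟨j, k⟩ h
    simp only [Finset.mem_biUnion, Finset.mem_image, Finset.mem_erase]
    refine ⟨j, by simp, k, ⟨?_, by simp⟩, rfl⟩
    rintro rfl
    exact hc j (by simpa using h)
  have h4 := (Finset.card_le_card h3).trans Finset.card_biUnion_le
  have h5 : ∑ j : J, ((Finset.univ.erase (c j)).image (fun k => (j, k))).card ≤
      Fintype.card J * (Fintype.card K - 1) := by
    rw [← smul_eq_mul, ← Finset.card_univ (α := J), ← Finset.sum_const]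
    refine Finset.sum_le_sum fun j _ => Finset.card_image_le.trans ?_
    rw [Finset.card_erase_of_mem (by simp), Finset.card_univ]
  rw [List.toFinset_card_of_nodup hnd] at h4
  omega

theorem dold {ι : Type} [Fintype ι] (b : Module.Basis ι (ZMod p) K) {N : ℕ}
    (hN : Fintype.card J * (Fintype.card K - 1) ≤ N) (e : ℕ → Ch K (J × K))
    (he : ∀ i ≤ N, e i ∈ Sp (R := K) (GLs (J := J) (K := K) (i + 1))) (he0 : bd (e 0) = sg [])
    (hes : ∀ i < N, bd (e (i + 1)) = (Xo b ^ nn p (i + 1)) (e i)) : False := by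
  have hp := (Fact.out : p.Prime).two_le
  obtain ⟨y, hyD, hyS, hxy⟩ := exists_y_op (J := J) p b
  have hXD : ∀ v ∈ DD (K := K) (W := J × K), Xo b v ∈ DD (K := K) := by
    intro v hv
    rw [Xo_apply]
    exact sum_mem fun i _ => Submodule.smul_mem _ _ (sub_mem (T_DD _ _ hv) hv)
  have hXS : ∀ n, ∀ v ∈ Sp (R := K) (GLs (J := J) (K := K) n), Xo b v ∈ Sp (R := K) (GLs (J := J) (K := K) n) :=
    fun n v hv => Xo_Sp b GLs_tr hv
  have hbd : ∀ n, ∀ v ∈ Sp (R := K) (GLs (J := J) (K := K) (n + 1)), bd v ∈ Sp (R := K) (GLs (J := J) (K := K) n) := by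
    intro n v hv
    refine bd_Sp ?_ hv
    rintro l ⟨h1, h2⟩ m hm hml
    refine ⟨by omega, fun j => ?_⟩
    obtain ⟨c, hc⟩ := h2 j
    exact ⟨c, fun h => hc (hm.subset h)⟩
  have key : ∀ k ≤ N, ∃ u ∈ Sp (R := K) (GLs (J := J) (K := K) (N - k + 2)),
      ∃ u' ∈ Sp (R := K) (GLs (J := J) (K := K) (N - k + 1)),
      e (N - k) - bd u - (Xo b ^ nn p (N - k)) u' ∈ DD (K := K) := by
    intro k
    induction k with
    | zero =>
      intro _
      refine ⟨0, zero_mem _, 0, zero_mem _, ?_⟩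
      simpa using GLs_DD (by omega) (he N le_rfl)
    | succ k ih =>
      intro hk
      obtain ⟨u, hu, u', hu', h⟩ := ih (by omega)
      obtain ⟨i, hi, hi'⟩ : ∃ i, N - k = i + 1 ∧ N - (k + 1) = i := ⟨N - (k + 1), by omega, rfl⟩
      rw [hi] at hu hu' h
      rw [hi']
      have h1 := DD_bd _ h
      rw [map_sub, map_sub, bd_bd, sub_zero, hes i (by omega), ← Xo_pow_bd, ← map_sub] at h1
      obtain ⟨w, hw, hw'⟩ := weyl_nn p (S := Sp (R := K) (GLs (J := J) (K := K) (i + 1))) hXD (hXS _) hyD (hyS _) (hxy i) i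
        (sub_mem (he i (by omega)) (hbd _ _ hu')) h1
      exact ⟨u', hu', w, hw, hw'⟩
  obtain ⟨u, hu, u', hu', h⟩ := key N le_rfl
  simp only [Nat.sub_self] at hu hu' h
  have h1 := DD_bd _ h
  rw [map_sub, map_sub, bd_bd, sub_zero, he0, ← Xo_pow_bd] at h1
  have h2 : (Xo b ^ nn p 0) (bd u') = 0 := by
    refine Sp_eq (G := 0) ?_ (hbd _ _ hu')
    rintro l ⟨hl, -⟩
    rw [List.length_eq_zero_iff.1 hl]
    obtain ⟨q, hq⟩ : ∃ q, nn p 0 = q + 1 := ⟨p - 2, by simp [nn]; omega⟩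
    rw [hq, pow_succ, Module.End.mul_apply, Xo_nil]
    simp
  rw [h2, sub_zero] at h1
  have := DD_nil _ h1
  simp [sg] at this

end F9c
end Tv

end

noncomputable section
namespace Tv
open Finsupp

section F8

theorem homog_cont {E V : Type} [TopologicalSpace E] [Fintype V] {S : Set E} {B : Set (V → ℝ)}
    (hB : IsCompact B) {s : E → ℝ} {z : E → V → ℝ} {g : (V → ℝ) → ℝ} (hs : ContinuousOn s S)
    (hz : ContinuousOn z S) (hg : ContinuousOn g B) (h : ∀ y ∈ S, s y ≠ 0 → (s y)⁻¹ • z y ∈ B) :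
    ContinuousOn (fun y => s y * g ((s y)⁻¹ • z y)) S := by
  obtain ⟨C, hC⟩ := hB.exists_bound_of_continuousOn hg
  intro y hy
  by_cases h0 : s y = 0
  · have h1 : Filter.Tendsto (fun y => |s y| * |C|) (nhdsWithin y S) (nhds 0) := by
      have h2 : ContinuousWithinAt (fun y => |s y| * |C|) S y := ((hs y hy).abs).mul continuousWithinAt_const
      have h3 := h2.tendsto
      simpa [h0] using h3
    unfold ContinuousWithinAt
    simp only [h0, zero_mul]
    refine squeeze_zero_norm' ?_ h1
    filter_upwards [self_mem_nhdsWithin] with x hx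
    by_cases h2 : s x = 0
    · simp [h2]
    · rw [norm_mul, Real.norm_eq_abs]
      exact mul_le_mul_of_nonneg_left ((hC _ (h x hx h2)).trans (le_abs_self _)) (abs_nonneg _)
  · have hev : ∀ᶠ x in nhdsWithin y S, s x ≠ 0 := (hs y hy).eventually_ne h0
    refine (hs y hy).mul ?_
    have hin : ContinuousWithinAt (fun x => (s x)⁻¹ • z x) S y := ((hs y hy).inv₀ h0).smul (hz y hy)
    unfold ContinuousWithinAt
    refine (hg _ (h y hy h0)).tendsto.comp ?_
    refine tendsto_nhdsWithin_iff.2 ⟨hin, ?_⟩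
    filter_upwards [self_mem_nhdsWithin, hev] with x hx h2 using h x hx h2

variable {K : Type} [Field K] [Fintype K] [DecidableEq K] {V D : Type} [Fintype V] [DecidableEq V]
  [Fintype D] [DecidableEq D]

/-- the color slice of a point -/
def sl (y : Option V × K → ℝ) (c : K) : V → ℝ := fun v => y (some v, c)

def ms (y : Option V × K → ℝ) (c : K) : ℝ := ∑ v, sl y c v

def FF (f : (V → ℝ) → D → ℝ) (y : Option V × K → ℝ) : Option D → K → ℝ
  | none, c => ∑ o, y (o, c)
  | Option.some j, c => ms y c * f ((ms y c)⁻¹ • sl y c) j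

def bb (f : (V → ℝ) → D → ℝ) (y : Option V × K → ℝ) (a : Option D × K) : ℝ :=
  FF f y a.1 a.2 - Finset.univ.inf' ⟨0, Finset.mem_univ _⟩ (FF f y a.1)

def perm (g : K) : (Option V × K → ℝ) →ₗ[ℝ] (Option V × K → ℝ) where
  toFun y := fun a => y (tr (-g) a)
  map_add' _ _ := rfl
  map_smul' _ _ := rfl

theorem perm_apply (g : K) (y : Option V × K → ℝ) (o : Option V) (c : K) : perm g y (o, c) = y (o, c - g) := by
  simp [perm, tr, sub_eq_neg_add]

theorem perm_pt (g : K) (a : Option V × K) : perm g (pt a) = pt (tr g a) := by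
  obtain ⟨o, c⟩ := a
  ext ⟨o', c'⟩
  rw [perm_apply]
  simp only [pt, tr, Pi.single_apply, Prod.mk.injEq, sub_eq_iff_eq_add, add_comm g c]

theorem perm_perm (g h : K) (y : Option V × K → ℝ) : perm g (perm h y) = perm (g + h) y := by
  ext ⟨o, c⟩
  simp only [perm_apply]; congr 2; ring

theorem perm_zero (y : Option V × K → ℝ) : perm 0 y = y := by
  ext ⟨o, c⟩; simp [perm_apply]

theorem FF_perm (f : (V → ℝ) → D → ℝ) (g : K) (y : Option V × K → ℝ) (j : Option D) (c : K) :
    FF f (perm g y) j c = FF f y j (c - g) := by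
  have h1 : sl (perm g y) c = sl y (c - g) := by ext v; simp [sl, perm_apply]
  cases j with
  | none => simp [FF, perm_apply]
  | some j => simp [FF, ms, h1]

theorem bb_perm (f : (V → ℝ) → D → ℝ) (g : K) (y : Option V × K → ℝ) (a : Option D × K) :
    bb f (perm g y) (tr g a) = bb f y a := by
  obtain ⟨j, c⟩ := a
  unfold bb
  congr 1
  · simp [tr, FF_perm]
  · apply le_antisymm
    · refine Finset.le_inf' _ _ fun c _ => ?_
      refine (Finset.inf'_le _ (Finset.mem_univ (c + g))).trans ?_
      simp [tr, FF_perm]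
    · refine Finset.le_inf' _ _ fun c _ => ?_
      refine (Finset.inf'_le _ (Finset.mem_univ (c - g))).trans ?_
      simp [tr, FF_perm]

variable {X : Set (Finset V)}

theorem sl_Bd (hX : IsLowerSet X) {y : Option V × K → ℝ} (hy : y ∈ Bd (YY (K := K) X)) {c : K}
    (h : ms y c ≠ 0) : (ms y c)⁻¹ • sl y c ∈ Bd X := by
  have h0 := Bd_nonneg hy
  have h1 := psup_mem_of_Bd (YY_lower hX) hy
  have hm : 0 ≤ ms y c := Finset.sum_nonneg fun v _ => h0 _
  refine Dl_subset_Bd (h1.1 c) ⟨fun v => ?_, ?_, fun v hv => ?_⟩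
  · exact mul_nonneg (inv_nonneg.2 hm) (h0 _)
  · simp only [Pi.smul_apply, smul_eq_mul, ← Finset.mul_sum]
    exact inv_mul_cancel₀ h
  · rw [mem_cls, mem_psup] at hv
    have : y (some v, c) = 0 := le_antisymm (not_lt.1 hv) (h0 _)
    simp [sl, this]

theorem ms_cont (c : K) : Continuous (fun y : Option V × K → ℝ => ms y c) := by
  unfold ms sl; fun_prop

theorem FF_cont (hX : IsLowerSet X) {f : (V → ℝ) → D → ℝ} (hf : ContinuousOn f (Bd X)) (j : Option D) (c : K) :
    ContinuousOn (fun y => FF f y j c) (Bd (YY (K := K) X)) := by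
  cases j with
  | none => exact Continuous.continuousOn (by unfold FF; fun_prop)
  | some j =>
    have hz : Continuous (fun y : Option V × K → ℝ => sl y c) := by unfold sl; fun_prop
    exact homog_cont (g := fun x => f x j) (Bd_compact X) (ms_cont c).continuousOn hz.continuousOn
      (continuousOn_pi.1 hf j) (fun y hy h => sl_Bd hX hy h)

theorem bb_cont (hX : IsLowerSet X) {f : (V → ℝ) → D → ℝ} (hf : ContinuousOn f (Bd X)) :
    ContinuousOn (bb (K := K) f) (Bd (YY (K := K) X)) := by
  refine continuousOn_pi.2 fun a => ?_
  unfold bb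
  refine (FF_cont hX hf _ _).sub ?_
  exact ContinuousOn.finset_inf'_apply _ fun c _ => FF_cont hX hf _ c

theorem bb_pos (hX : IsLowerSet X) {f : (V → ℝ) → D → ℝ} (hcard : 1 < Fintype.card K)
    (hno : ∀ x : K → V → ℝ, (∀ c, x c ∈ Bd X) → (∀ c c', c ≠ c' → Disjoint (psup (x c)) (psup (x c'))) →
      (∀ c c', f (x c) = f (x c')) → False)
    {y : Option V × K → ℝ} (hy : y ∈ Bd (YY (K := K) X)) : ∃ a, 0 < bb f y a := by
  by_contra! hcon
  have h0 := Bd_nonneg hy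
  have h1 := psup_mem_of_Bd (YY_lower hX) hy
  have hs := Bd_sum hy
  have hle : ∀ j c c', FF f y j c ≤ FF f y j c' := by
    intro j c c'
    have := hcon (j, c)
    unfold bb at this
    have h2 := Finset.inf'_le (FF f y j) (Finset.mem_univ c')
    simp only at this
    linarith
  have heq : ∀ j c c', FF f y j c = FF f y j c' := fun j c c' => le_antisymm (hle _ _ _) (hle _ _ _)
  have hpos : ∀ c, 0 < FF f y none c := by
    intro c
    by_contra hc
    have : ∑ a, y a ≤ 0 := by
      rw [Fintype.sum_prod_type_right]
      refine Finset.sum_nonpos fun c' _ => ?_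
      have h3 := heq none c' c
      simp only [FF] at h3 hc
      rw [h3]; exact not_lt.1 hc
    linarith
  have hex : ∀ c, ∃ o, (o, c) ∈ psup y := by
    intro c
    obtain ⟨o, _, ho⟩ := Finset.exists_lt_of_sum_lt (s := Finset.univ) (f := fun _ => (0 : ℝ))
      (g := fun o => y (o, c)) (by simpa [FF] using hpos c)
    exact ⟨o, mem_psup.2 ho⟩
  rcases h1.2 with ⟨h2, h3⟩ | ⟨c, h2⟩
  · have hms : ∀ c, ms y c = FF f y none c := by
      intro c
      simp only [FF, Fintype.sum_option, ms, sl]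
      have : y (none, c) = 0 := by
        refine le_antisymm (not_lt.1 fun h => ?_) (h0 _)
        exact h2 (none, c) (mem_psup.2 h) rfl
      rw [this, zero_add]
    refine hno (fun c => (ms y c)⁻¹ • sl y c) (fun c => sl_Bd hX hy ?_) ?_ ?_
    · rw [hms]; exact (hpos c).ne'
    · intro c c' hcc
      rw [Finset.disjoint_left]
      have key : ∀ c v, v ∈ psup ((ms y c)⁻¹ • sl y c) → (some v, c) ∈ psup y := by
        intro c v hv
        rw [mem_psup] at hv ⊢
        rw [Pi.smul_apply, smul_eq_mul] at hv
        refine pos_of_mul_pos_right hv (inv_nonneg.2 ?_)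
        rw [hms]; exact (hpos c).le
      intro v hv hv'
      exact hcc (h3 v c c' (key c v hv) (key c' v hv'))
    · intro c c'
      ext j
      have h4 := heq (some j) c c'
      simp only [FF] at h4
      have h5 : ms y c = ms y c' := by rw [hms, hms]; exact heq _ _ _
      rw [← h5] at h4
      have h6 : ms y c ≠ 0 := by rw [hms]; exact (hpos c).ne'
      have h7 := mul_left_cancel₀ h6 h4
      simpa only [← h5] using h7
  · have := Fintype.one_lt_card_iff_nontrivial.1 hcard
    obtain ⟨c', hc'⟩ := exists_ne c
    obtain ⟨o, ho⟩ := hex c'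
    exact hc' (h2 _ ho)

theorem perm_free (hX : IsLowerSet X) {y : Option V × K → ℝ} (hy : y ∈ Bd (YY (K := K) X)) {g : K}
    (h : perm g y = y) : g = 0 := by
  have h1 := psup_mem_of_Bd (YY_lower hX) hy
  have hs := Bd_sum hy
  obtain ⟨⟨o, c⟩, _, ho⟩ := Finset.exists_lt_of_sum_lt (s := Finset.univ) (f := fun _ => (0 : ℝ))
      (g := fun o => y o) (by simp [hs])
  have ha : (o, c) ∈ psup y := mem_psup.2 ho
  have hb : (o, c + g) ∈ psup y := by
    rw [mem_psup, ← h, perm_apply]; simpa using ho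
  have : c = c + g := by
    rcases h1.2 with ⟨h2, h3⟩ | ⟨c', h2⟩
    · cases o with
      | none => exact absurd rfl (h2 _ ha)
      | some v => exact h3 v _ _ ha hb
    · exact (h2 _ ha).trans (h2 _ hb).symm
  simpa using this

theorem perm_Bd {y : Option V × K → ℝ} (hy : y ∈ Bd (YY (K := K) X)) (g : K) :
    perm g y ∈ Bd (YY (K := K) X) := by
  simp only [Bd, Set.mem_iUnion] at hy
  obtain ⟨s, hs, h⟩ := hy
  have h1 : s.toList.toFinset = s := by simp
  have h2 := YY_tr g (l := s.toList) (by rw [h1]; exact hs)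
  refine Dl_subset_Bd h2 ⟨?_, ?_, ?_⟩
  · rintro ⟨o, c⟩; rw [perm_apply]; exact h.1 _
  · rw [← h.2.1, Fintype.sum_prod_type, Fintype.sum_prod_type]
    refine Finset.sum_congr rfl fun o _ => ?_
    simp only [perm_apply]
    exact Equiv.sum_comp (Equiv.subRight g) (fun c => y (o, c))
  · rintro ⟨o, c⟩ hv
    rw [perm_apply]
    apply h.2.2
    intro h3
    apply hv
    rw [List.mem_toFinset, mem_map_tr]
    simpa using h3

theorem exists_eta (hX : IsLowerSet X) {f : (V → ℝ) → D → ℝ} {τ : ℝ}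
    (h : ∀ y ∈ Bd (YY (K := K) X), ∃ a, τ ≤ bb f y a) :
    ∃ η : (Option V × K → ℝ) → Option D × K, (∀ y ∈ Bd (YY (K := K) X), τ ≤ bb f y (η y)) ∧
      ∀ g, ∀ y ∈ Bd (YY (K := K) X), η (perm g y) = tr g (η y) := by
  classical
  let st : Setoid (Option V × K → ℝ) :=
    { r := fun y y' => ∃ g, perm g y = y'
      iseqv := ⟨fun y => ⟨0, perm_zero y⟩, by
        rintro y _ ⟨g, rfl⟩
        exact ⟨-g, by rw [perm_perm]; simp [perm_zero]⟩, by
        rintro y _ _ ⟨g, rfl⟩ ⟨g', rfl⟩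
        exact ⟨g' + g, by rw [perm_perm]⟩⟩ }
  let ρ : (Option V × K → ℝ) → (Option V × K → ℝ) := fun y => (Quotient.mk st y).out
  have hρ : ∀ y, ∃ g, perm g (ρ y) = y := fun y => Quotient.exact (s := st) (Quotient.out_eq _)
  have hρg : ∀ g y, ρ (perm g y) = ρ y := by
    intro g y
    simp only [ρ]
    congr 1
    exact Quotient.sound (s := st) ⟨-g, by rw [perm_perm]; simp [perm_zero]⟩
  choose γ hγ using hρ
  have hρB : ∀ y ∈ Bd (YY (K := K) X), ρ y ∈ Bd (YY (K := K) X) := by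
    intro y hy
    have : ρ y = perm (- γ y) y := by
      have h2 := congrArg (perm (- γ y)) (hγ y)
      rw [perm_perm, neg_add_cancel, perm_zero] at h2
      exact h2
    rw [this]; exact perm_Bd hy _
  choose! η0 hη0 using h
  refine ⟨fun y => tr (γ y) (η0 (ρ y)), ?_, ?_⟩
  · intro y hy
    have h1 := hη0 _ (hρB y hy)
    have h2 := bb_perm f (γ y) (ρ y) (η0 (ρ y))
    rw [hγ] at h2
    rw [h2]; exact h1
  · intro g y hy
    simp only [hρg]
    have h1 : γ (perm g y) = g + γ y := by
      have h2 := hγ (perm g y)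
      rw [hρg] at h2
      have h3 : perm (-(g + γ y)) (perm (γ (perm g y)) (ρ y)) = ρ y := by
        have h5 := congrArg (perm (- γ y)) (hγ y)
        rw [perm_perm, neg_add_cancel, perm_zero] at h5
        rw [h2, perm_perm, h5]; congr 1; ring_nf
      rw [perm_perm] at h3
      have h4 := perm_free hX (hρB y hy) h3
      linear_combination h4
    rw [h1, ← tr_tr]; rfl

theorem no_tverberg_false (p : ℕ) [Fact p.Prime] [CharP K p] [Algebra (ZMod p) K]
    {ι : Type} [Fintype ι] (b : Module.Basis ι (ZMod p) K)
    (hX : IsLowerSet X) (h0 : ∅ ∈ X) {N : ℕ} (hN0 : 0 < N)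
    (hN : Fintype.card (Option D) * (Fintype.card K - 1) ≤ N) (Dt : FlagData K X N)
    {f : (V → ℝ) → D → ℝ} (hf : ContinuousOn f (Bd X)) (hcard : 1 < Fintype.card K)
    (hno : ∀ x : K → V → ℝ, (∀ c, x c ∈ Bd X) → (∀ c c', c ≠ c' → Disjoint (psup (x c)) (psup (x c'))) →
      (∀ c c', f (x c) = f (x c')) → False) : False := by
  obtain ⟨c, hc, hc0, hcs⟩ := exists_zigzag p b hX h0 hN0 Dt
  obtain ⟨τ, hτ, hτb⟩ := exists_tau (Bd_compact (YY (K := K) X)) (bb_cont hX hf)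
    (fun y hy => bb_pos hX hcard hno hy)
  obtain ⟨η, hη, hηg⟩ := exists_eta hX hτb
  obtain ⟨δ, hδ, hδb⟩ := uc_on (Bd_compact (YY (K := K) X)) (bb_cont hX hf) hτ
  choose M₀ hM₀ using fun n => SdM_simplex (R := K) (V := Option V × K) n hδ
  let M := (Finset.range (N + 2)).sup M₀
  have hM : ∀ n ≤ N + 1, ∀ l : List (Option V × K), l.length = n →
      SdM M (sg (l.map pt) : Ch K (Option V × K → ℝ)) ∈ Sp (R := K) (Li (Dl l.toFinset) n ∩ Fi δ) :=
    fun n hn => hM₀ n M (Finset.le_sup (f := M₀) (by simp; omega))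
  let ψ : Ch K (Option V × K) →ₗ[K] Ch K (Option D × K) := (push η) ∘ₗ (SdM M) ∘ₗ (push pt)
  have hψ : ∀ z, ψ z = push η (SdM M (push pt z)) := fun z => rfl
  have hψS : ∀ n ≤ N + 1, ∀ z ∈ Sp (R := K) (La (YY (K := K) X) n), ψ z ∈ Sp (R := K) (GLs (J := Option D) (K := K) n) := by
    intro n hn z hz
    refine Sp_map (F := ψ) ?_ hz
    intro l hl
    rw [hψ, push_sg]
    refine push_Sp (s := Li (Dl l.toFinset) n ∩ Fi δ) ?_ (hM n hn l hl.1)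
    rintro m ⟨⟨hm1, hm2⟩, hm3⟩
    refine ⟨by simpa using hm1, fun j => ?_⟩
    cases m with
    | nil => exact ⟨0, by simp⟩
    | cons y m =>
      obtain ⟨c, _, hc⟩ := Finset.exists_mem_eq_inf' (s := Finset.univ) ⟨(0 : K), Finset.mem_univ _⟩ (FF f y j)
      refine ⟨c, fun hin => ?_⟩
      obtain ⟨y', hy', hyc⟩ := List.mem_map.1 hin
      have hyB := Dl_subset_Bd hl.2 (hm2 y (by simp))
      have hyB' := Dl_subset_Bd hl.2 (hm2 y' hy')
      have h1 := hδb y hyB y' hyB' (hm3 y (by simp) y' hy')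
      have h2 := hη y' hyB'
      rw [hyc] at h2
      have h3 : bb f y (j, c) = 0 := by unfold bb; simp only [hc]; simp
      have h4 := (dist_le_pi_dist (bb f y) (bb f y') (j, c)).trans_lt h1
      rw [h3, Real.dist_eq, zero_sub, abs_neg] at h4
      linarith [le_abs_self (bb f y' (j, c))]
  have hT : ∀ n ≤ N + 1, ∀ g, ∀ z ∈ Sp (R := K) (La (YY (K := K) X) n), ψ (T g z) = T g (ψ z) := by
    intro n hn g z hz
    refine Sp_eq (F := ψ ∘ₗ T g) (G := (T g) ∘ₗ ψ) ?_ hz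
    intro l hl
    have h1 := hM n hn l hl.1
    show ψ (T g (sg l)) = T g (ψ (sg l))
    rw [T_sg, hψ, hψ, push_sg, push_sg, List.map_map]
    have h2 : (pt ∘ tr g : Option V × K → Option V × K → ℝ) = perm g ∘ pt := by
      ext1 a; exact (perm_pt g a).symm
    rw [h2, ← List.map_map, ← push_sg, ← SdM_push, push_push]
    unfold T
    rw [push_push]
    refine push_congr h1 ?_
    rintro m ⟨hm, _⟩ y hy
    exact hηg g y (Dl_subset_Bd hl.2 (hm.2 y hy))
  have hLa : ∀ n, ∀ g, ∀ l ∈ La (YY (K := K) X) n, l.map (tr g) ∈ La (YY (K := K) X) n :=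
    fun n g l hl => ⟨by simpa using hl.1, YY_tr g hl.2⟩
  have hXo : ∀ n ≤ N + 1, ∀ k, ∀ z ∈ Sp (R := K) (La (YY (K := K) X) n),
      ψ ((Xo b ^ k) z) = (Xo b ^ k) (ψ z) := by
    intro n hn k z hz
    induction k with
    | zero => simp
    | succ k ih =>
      rw [pow_succ', pow_succ', Module.End.mul_apply, Module.End.mul_apply, ← ih, Xo_apply, Xo_apply, map_sum]
      refine Finset.sum_congr rfl fun i _ => ?_
      rw [map_smul, map_sub, hT n hn _ _ (Xo_pow_Sp b (hLa n) k hz)]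
  have hbd : ∀ z, bd (ψ z) = ψ (bd z) := by
    intro z
    rw [hψ, hψ, ← push_bd, bd_SdM, ← push_bd]
  refine dold (J := Option D) p b hN (fun i => ψ (c i)) ?_ ?_ ?_
  · intro i hi; exact hψS _ (by omega) _ (hc i hi)
  · rw [hbd, hc0, hψ, push_sg]; simp [SdM_nil]
  · intro i hi
    rw [hbd, hcs i hi]
    exact hXo (i + 1) (by omega) _ _ (hc i hi.le)

end F8
end Tv

end

noncomputable section
namespace Tv
open Finsupp

section F10
variable {E : Type} [NormedAddCommGroup E] [NormedSpace ℝ E]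
variable {S : Set E} [Fintype S] [DecidableEq S]

def Ph (y : S → ℝ) : E := ∑ v, y v • (v : E)

theorem Ph_cont : Continuous (Ph (S := S)) := by unfold Ph; fun_prop

def em (s : Finset S) : Finset E := s.map (Function.Embedding.subtype _)

theorem mem_em {s : Finset S} {v : S} : (v : E) ∈ em s ↔ v ∈ s := by simp [em]

theorem Ph_hull {s : Finset S} {y : S → ℝ} (hy : y ∈ Dl s) : Ph y ∈ convexHull ℝ (em s : Set E) := by
  have h1 : Ph y = ∑ v ∈ s, y v • (v : E) := by
    unfold Ph
    symm
    refine Finset.sum_subset (Finset.subset_univ _) fun v _ hv => ?_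
    rw [hy.2.2 v hv, zero_smul]
  have h2 : ∑ v ∈ s, y v = 1 := by
    rw [← hy.2.1]
    exact Finset.sum_subset (Finset.subset_univ _) fun v _ hv => hy.2.2 v hv
  rw [h1]
  refine (convex_convexHull ℝ _).sum_mem (fun v _ => hy.1 v) h2 fun v hv => subset_convexHull ℝ _ ?_
  exact Finset.mem_coe.2 (mem_em.2 hv)

theorem hull_Ph {s : Finset S} {x : E} (hx : x ∈ convexHull ℝ (em s : Set E)) : ∃ y ∈ Dl s, Ph y = x := by
  classical
  rw [Finset.mem_convexHull'] at hx
  obtain ⟨w, h0, h1, h2⟩ := hx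
  rw [em, Finset.sum_map] at h1 h2
  refine ⟨fun v => if v ∈ s then w v else 0, ⟨fun v => ?_, ?_, fun v hv => by simp [hv]⟩, ?_⟩
  · dsimp only; split_ifs with h
    · exact h0 _ (mem_em.2 h)
    · exact le_rfl
  · rw [← h1, Finset.sum_ite_mem]; simp
  · rw [← h2]; unfold Ph
    simp only [ite_smul, zero_smul, Finset.sum_ite_mem]; simp

theorem Ph_indep {s : Finset S} (hs : AffineIndependent ℝ ((↑) : em s → E)) {y y' : S → ℝ}
    (hy : y ∈ Dl s) (hy' : y' ∈ Dl s) (h : Ph y = Ph y') : y = y' := by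
  let g : {v // v ∈ s} ↪ (em s : Finset E) :=
    ⟨fun v => ⟨(v : S), mem_em.2 v.2⟩, by
      intro a b hab
      have := congrArg (fun z : (em s : Finset E) => (z : E)) hab
      exact Subtype.ext (Subtype.ext this)⟩
  have h1 := affineIndependent_iff.1 (hs.comp_embedding g) Finset.univ (fun v => y v - y' v)
  have e1 : ∀ F : S → ℝ, (∀ v, v ∉ s → F v = 0) → ∑ v : {v // v ∈ s}, F v = ∑ v, F v := by
    intro F hF
    rw [Finset.sum_coe_sort s F]
    exact Finset.sum_subset (Finset.subset_univ _) fun v _ hv => hF v hv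
  have e2 : ∀ F : S → E, (∀ v, v ∉ s → F v = 0) → ∑ v : {v // v ∈ s}, F v = ∑ v, F v := by
    intro F hF
    rw [Finset.sum_coe_sort s F]
    exact Finset.sum_subset (Finset.subset_univ _) fun v _ hv => hF v hv
  have h2 := h1 (by
      rw [e1 (fun v => y v - y' v) (fun v hv => by simp [hy.2.2 v hv, hy'.2.2 v hv]), Finset.sum_sub_distrib,
        hy.2.1, hy'.2.1, sub_self]) (by
      have := e2 (fun v => (y v - y' v) • (v : E)) (fun v hv => by simp [hy.2.2 v hv, hy'.2.2 v hv])
      refine this.trans ?_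
      simp only [sub_smul, Finset.sum_sub_distrib]
      exact sub_eq_zero.2 h)
  ext v
  by_cases hv : v ∈ s
  · exact sub_eq_zero.1 (h2 ⟨v, hv⟩ (Finset.mem_univ _))
  · rw [hy.2.2 v hv, hy'.2.2 v hv]

def XX (C : Geometry.SimplicialComplex ℝ E) (S : Set E) : Set (Finset S) := {s | s = ∅ ∨ em s ∈ C.faces}

variable (C : Geometry.SimplicialComplex ℝ E)

theorem XX_lower : IsLowerSet (XX C S) := by
  intro s t hts hs
  by_cases ht : t = ∅
  · exact Or.inl ht
  right
  rcases hs with rfl | hs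
  · exact absurd (Finset.subset_empty.1 hts) ht
  · exact C.down_closed hs (Finset.map_subset_map.2 hts) (by
      simpa [em] using Finset.nonempty_iff_ne_empty.2 ht)

theorem Dl_ne {V : Type} [Fintype V] [DecidableEq V] {s : Finset V} {y : V → ℝ} (hy : y ∈ Dl s) : s ≠ ∅ := by
  rintro rfl
  have h1 := hy.2.1
  rw [Finset.sum_eq_zero fun v _ => hy.2.2 v (by simp)] at h1
  exact zero_ne_one h1

theorem Bd_face {y : S → ℝ} (hy : y ∈ Bd (XX C S)) : y ∈ Dl (psup y) ∧ em (psup y) ∈ C.faces := by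
  have h1 := psup_mem_of_Bd (XX_lower C) hy
  have h2 : y ∈ Dl (psup y) := by
    simp only [Bd, Set.mem_iUnion] at hy
    obtain ⟨s, hs, h⟩ := hy
    exact mem_Dl_psup h
  exact ⟨h2, h1.resolve_left (Dl_ne h2)⟩

theorem Ph_space {y : S → ℝ} (hy : y ∈ Bd (XX C S)) : Ph y ∈ C.space :=
  C.convexHull_subset_space (Bd_face C hy).2 (Ph_hull (Bd_face C hy).1)

theorem Ph_inj {y y' : S → ℝ} (hy : y ∈ Bd (XX C S)) (hy' : y' ∈ Bd (XX C S)) (h : Ph y = Ph y') : y = y' := by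
  classical
  obtain ⟨h1, h2⟩ := Bd_face C hy
  obtain ⟨h1', h2'⟩ := Bd_face C hy'
  have h3 := C.inter_subset_convexHull h2 h2' ⟨Ph_hull h1, by rw [h]; exact Ph_hull h1'⟩
  have h4 : (em (psup y) : Set E) ∩ em (psup y') = em (psup y ∩ psup y') := by
    ext x; simp [em]
  rw [h4] at h3
  obtain ⟨z, hz, hzx⟩ := hull_Ph h3
  have e1 := Ph_indep (C.indep h2) h1 (Dl_mono Finset.inter_subset_left hz) hzx.symm
  have e2 := Ph_indep (C.indep h2') h1' (Dl_mono Finset.inter_subset_right hz) (by rw [hzx, h])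
  rw [e1, e2]

theorem Ph_surj (hS : ∀ s ∈ C.faces, (s : Set E) ⊆ S) {x : E} (hx : x ∈ C.space) :
    ∃ y ∈ Bd (XX C S), Ph y = x := by
  classical
  obtain ⟨s, hs, hxs⟩ := C.mem_space_iff.1 hx
  let t : Finset S := Finset.univ.filter (fun v => (v : E) ∈ s)
  have ht : em t = s := by
    ext x
    constructor
    · intro h; simp [em, t] at h; exact h.1
    · intro h
      exact (mem_em (v := ⟨x, hS s hs h⟩)).2 (by simpa [t] using h)
  rw [← ht] at hxs
  obtain ⟨y, hy, hyx⟩ := hull_Ph hxs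
  exact ⟨y, Dl_subset_Bd (Or.inr (by rw [ht]; exact hs)) hy, hyx⟩

def Phh (hS : ∀ s ∈ C.faces, (s : Set E) ⊆ S) : Bd (XX C S) ≃ₜ C.space := by
  haveI : CompactSpace (Bd (XX C S)) := isCompact_iff_compactSpace.1 (Bd_compact _)
  refine Continuous.homeoOfEquivCompactToT2 (f := Equiv.ofBijective
    (fun y : Bd (XX C S) => (⟨Ph y.1, Ph_space C y.2⟩ : C.space)) ⟨?_, ?_⟩) ?_
  · intro y y' h
    exact Subtype.ext (Ph_inj C y.2 y'.2 (congrArg Subtype.val h))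
  · rintro ⟨x, hx⟩
    obtain ⟨y, hy, h⟩ := Ph_surj C hS hx
    exact ⟨⟨y, hy⟩, Subtype.ext h⟩
  · exact (Ph_cont.comp continuous_subtype_val).subtype_mk _

theorem Phh_apply (hS : ∀ s ∈ C.faces, (s : Set E) ⊆ S) (y : Bd (XX C S)) : (Phh C hS y : E) = Ph y.1 := rfl

theorem mkSph {V : Type} [Fintype V] [DecidableEq V] {X : Set (Finset V)} {F : Type} [NormedAddCommGroup F]
    (e : Bd X ≃ₜ (Metric.sphere (0 : F) 1 : Set F)) : Nonempty (SphHomeo X F) := by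
  classical
  refine ⟨{ u := fun y => if h : y ∈ Bd X then (e ⟨y, h⟩ : F) else 0
            k := fun x => if h : x ∈ Metric.sphere (0 : F) 1 then (e.symm ⟨x, h⟩ : V → ℝ) else 0
            hu := ?_, hk := ?_, mu := ?_, mkk := ?_, ku := ?_, uk := ?_ }⟩
  · rw [continuousOn_iff_continuous_domRestrict]
    have : Continuous fun y : Bd X => (e y : F) := continuous_subtype_val.comp e.continuous
    convert this using 1
    ext y; simp [y.2]
  · rw [continuousOn_iff_continuous_domRestrict]
    have : Continuous fun y : (Metric.sphere (0 : F) 1 : Set F) => (e.symm y : V → ℝ) :=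
      continuous_subtype_val.comp e.symm.continuous
    convert this using 1
    ext1 y
    simp only [Set.domRestrict_apply, dif_pos y.2]
  · intro y hy; simp only [dif_pos hy]; exact (e ⟨y, hy⟩).2
  · intro y hy; simp only [dif_pos hy]; exact (e.symm ⟨y, hy⟩).2
  · intro y hy
    have h2 := (e ⟨y, hy⟩).2
    simp only [dif_pos hy, dif_pos h2]; simp
  · intro y hy
    have h2 := (e.symm ⟨y, hy⟩).2
    simp only [dif_pos hy, dif_pos h2]; simp

theorem main (r d : ℕ) (hr : IsPrimePow r)
    (C : Geometry.SimplicialComplex ℝ E) (hKfin : C.faces.Finite)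
    (hsphere : Nonempty
      ((C.space : Set E) ≃ₜ
        (Metric.sphere (0 : EuclideanSpace ℝ (Fin ((d + 1) * (r - 1)))) 1 : Set _)))
    (f : C.space → EuclideanSpace ℝ (Fin d)) (hf : Continuous f) :
    ∃ σ : Fin r → Finset E, (∀ i, σ i ∈ C.faces) ∧
      (Pairwise fun i j => Disjoint (σ i) (σ j)) ∧
      (⋂ i, f '' {x : C.space | (x : E) ∈ convexHull ℝ ((σ i : Set E))}).Nonempty := by
  classical
  by_contra hcon
  obtain ⟨e⟩ := hsphere
  let S : Set E := ⋃ s ∈ C.faces, (s : Set E)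
  have hSf : S.Finite := hKfin.biUnion fun s _ => s.finite_toSet
  letI : Fintype S := hSf.fintype
  have hS : ∀ s ∈ C.faces, (s : Set E) ⊆ S := fun s hs => Set.subset_biUnion_of_mem (u := fun s : Finset E => (s : Set E)) hs
  obtain ⟨φ⟩ := mkSph ((Phh C hS).trans e)
  obtain ⟨p, k, hp, hk, rfl⟩ := (isPrimePow_nat_iff r).1 hr
  haveI : Fact p.Prime := ⟨hp⟩
  letI : Fintype (GaloisField p k) := Fintype.ofFinite _
  have hcardK : Fintype.card (GaloisField p k) = p ^ k := by
    rw [← Nat.card_eq_fintype_card]; exact GaloisField.card p k hk.ne'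
  have hr1 : 1 < p ^ k := Nat.one_lt_pow hk.ne' hp.one_lt
  have hX := XX_lower (S := S) C
  have hN0 : 0 < (d + 1) * (p ^ k - 1) := Nat.mul_pos (by omega) (by omega)
  obtain ⟨Dt⟩ := exists_flagData (R := GaloisField p k) hX (Or.inl rfl)
    (fun σ hσ hne n => acyc_costar hX φ hσ hne n) hN0
    (fun n hn => acyc_sphere hX φ (by simpa using hn))
  let b := Module.finBasis (ZMod p) (GaloisField p k)
  let f' : (S → ℝ) → Fin d → ℝ := fun y => if h : y ∈ Bd (XX C S) then (f (Phh C hS ⟨y, h⟩)).ofLp else 0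
  have hf'e : ∀ y (h : y ∈ Bd (XX C S)), f' y = (f (Phh C hS ⟨y, h⟩)).ofLp := fun y h => dif_pos h
  have hf' : ContinuousOn f' (Bd (XX C S)) := by
    rw [continuousOn_iff_continuous_domRestrict]
    have : Continuous fun y : Bd (XX C S) => (f (Phh C hS y)).ofLp :=
      (PiLp.continuous_ofLp 2 _).comp (hf.comp (Phh C hS).continuous)
    convert this using 1
    ext1 y
    rw [Set.domRestrict_apply, hf'e _ y.2]
  let ε : Fin (p ^ k) ≃ GaloisField p k := (Fintype.equivFinOfCardEq hcardK).symm
  refine no_tverberg_false p b hX (Or.inl rfl) hN0 (by simp [hcardK]) Dt hf' (by omega) ?_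
  intro x hx hd hfx
  apply hcon
  refine ⟨fun i => em (psup (x (ε i))), fun i => (Bd_face C (hx _)).2, ?_, ?_⟩
  · intro i j hij
    exact (Finset.disjoint_map _).2 (hd _ _ (ε.injective.ne hij))
  · refine ⟨f (Phh C hS ⟨x 0, hx 0⟩), Set.mem_iInter.2 fun i => ⟨Phh C hS ⟨x (ε i), hx _⟩, ?_, ?_⟩⟩
    · exact Ph_hull (Bd_face C (hx _)).1
    · have := hfx (ε i) 0
      rw [hf'e _ (hx _), hf'e _ (hx _)] at this
      exact WithLp.ofLp_injective 2 this

end F10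
end Tv

end

open Geometry

theorem tverberg_for_simplicial_spheres
    {E : Type} [NormedAddCommGroup E] [NormedSpace ℝ E]
    (r d : ℕ) (hr : IsPrimePow r) (hd : 1 ≤ d)
    (K : SimplicialComplex ℝ E) (hKfin : K.faces.Finite)
    (hsphere : Nonempty
      ((K.space : Set E) ≃ₜ
        (Metric.sphere (0 : EuclideanSpace ℝ (Fin ((d + 1) * (r - 1)))) 1 : Set _)))
    (f : K.space → EuclideanSpace ℝ (Fin d)) (hf : Continuous f) :
    ∃ σ : Fin r → Finset E, (∀ i, σ i ∈ K.faces) ∧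
      (Pairwise fun i j => Disjoint (σ i) (σ j)) ∧
      (⋂ i, f '' {x : K.space | (x : E) ∈ convexHull ℝ ((σ i : Set E))}).Nonempty := by
  exact Tv.main r d hr K hKfin hsphere f hf
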